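/- Let (R, m) be a 2-dimensional analytically unramified Gorenstein local ring with integral closure R̄ and conductor ideal 𝔠. Then the homological annihilator of R̄/R equals its annihilator: Hann_R(R̄/R) := ∏_{i=0}^{2} Ann_R(Ext^i_R(R̄/R, R)) = Ann_R(R̄/R) = 𝔠. -/

import Mathlib

open CategoryTheory IsLocalRing

set_option synthInstance.maxHeartbeats 1000000
set_option maxHeartbeats 1000000

noncomputable section

/-- The integral closure `R̄` of `R` in its total ring of fractions, viewed as a type
(with its canonical `R`-algebra and `R`-module structures). -/
abbrev IntClosure (R : Type) [CommRing R] : Type :=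
  ↥(integralClosure R (FractionRing R))

/-- The quotient `R`-module `R̄/R`. -/
abbrev IntClosureQuot (R : Type) [CommRing R] : Type :=
  IntClosure R ⧸ LinearMap.range (Algebra.linearMap R (IntClosure R))

/-- The conductor ideal `𝔠 = Ann_R(R̄/R) = {r : R | r • R̄ ⊆ R}`. -/
def conductorIdeal (R : Type) [CommRing R] : Ideal R :=
  Module.annihilator R (IntClosureQuot R)

/-- A local ring `R` is analytically unramified if its `m`-adic completion is reduced. -/
def AnalyticallyUnramified (R : Type) [CommRing R] [IsLocalRing R] : Prop :=
  IsReduced (AdicCompletion (maximalIdeal R) R)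

/-- `R` is normal: it is reduced and equal to its integral closure `R̄` in its total
ring of fractions. -/
def IsNormalRing (R : Type) [CommRing R] : Prop :=
  IsReduced R ∧ integralClosure R (FractionRing R) = ⊥

/-- `Ext^i_R(M, N)` as a type. -/
abbrev ExtMod (R : Type) [CommRing R] (M : Type) [AddCommGroup M] [Module R M]
    (N : Type) [AddCommGroup N] [Module R N] (i : ℕ) : Type :=
  ↥(((Ext R (ModuleCat.{0} R) i).obj (Opposite.op (ModuleCat.of R M))).obj (ModuleCat.of R N))

/-- `M` has finite projective dimension over `R`:
`Ext^i_R(M, -)` vanishes for all `i` bigger than some `n`. -/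
def HasFiniteProjDim (R : Type) [CommRing R] (M : Type) [AddCommGroup M] [Module R M] : Prop :=
  ∃ n : ℕ, ∀ (N : ModuleCat.{0} R) (i : ℕ), n < i →
    Subsingleton ↥(((Ext R (ModuleCat.{0} R) i).obj (Opposite.op (ModuleCat.of R M))).obj N)

/-- `M` has finite injective dimension over `R`:
`Ext^i_R(-, M)` vanishes for all `i` bigger than some `n`. -/
def HasFiniteInjDim (R : Type) [CommRing R] (M : Type) [AddCommGroup M] [Module R M] : Prop :=
  ∃ n : ℕ, ∀ (N : ModuleCat.{0} R) (i : ℕ), n < i →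
    Subsingleton ↥(((Ext R (ModuleCat.{0} R) i).obj (Opposite.op N)).obj (ModuleCat.of R M))

/-- The depth of an `R`-module `M` over a local ring `(R, m)`: the least `i` such that
`Ext^i_R(R/m, M) ≠ 0` (`⊤` if there is no such `i`), valued in `WithBot (WithTop ℕ)`
for easy comparison with `ringKrullDim`. -/
def moduleDepth (R : Type) [CommRing R] [IsLocalRing R]
    (M : Type) [AddCommGroup M] [Module R M] : WithBot (WithTop ℕ) :=
  sInf { n : WithBot (WithTop ℕ) |
    ∃ i : ℕ, n = (i : ℕ) ∧ Nontrivial (ExtMod R (ResidueField R) M i) }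

/-- A Noetherian local ring is Gorenstein if it has finite injective dimension
as a module over itself. -/
def IsGorensteinLocal (R : Type) [CommRing R] [IsLocalRing R] : Prop :=
  IsNoetherianRing R ∧ HasFiniteInjDim R R

/-- A Noetherian local ring is Cohen–Macaulay if its depth equals its Krull dimension. -/
def IsCohenMacaulayLocal (R : Type) [CommRing R] [IsLocalRing R] : Prop :=
  IsNoetherianRing R ∧ moduleDepth R R = ringKrullDim R

/-- A ring is Cohen–Macaulay if it is Noetherian and all its localizations at primes
are Cohen–Macaulay local rings. -/
def IsCohenMacaulayRing (A : Type) [CommRing A] : Prop :=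
  IsNoetherianRing A ∧ ∀ (p : Ideal A) [p.IsPrime],
    moduleDepth (Localization.AtPrime p) (Localization.AtPrime p) =
      ringKrullDim (Localization.AtPrime p)

/-- Serre's condition `(S2)`: `depth (R_p) ≥ min {2, height p}` for every prime `p`
(`height p` being the dimension of `R_p`). -/
def SerreS2 (R : Type) [CommRing R] : Prop :=
  ∀ (p : Ideal R) [p.IsPrime],
    min 2 (ringKrullDim (Localization.AtPrime p)) ≤
      moduleDepth (Localization.AtPrime p) (Localization.AtPrime p)

/-- A Noetherian local ring is regular if its maximal ideal can be generated by
`dim R` elements. -/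
def IsRegularLocal (A : Type) [CommRing A] [IsLocalRing A] : Prop :=
  IsNoetherianRing A ∧ ∃ s : Finset A, Ideal.span (s : Set A) = maximalIdeal A ∧
    (s.card : WithBot (WithTop ℕ)) = ringKrullDim A

/-- Serre's condition `(R1)`: `R_p` is regular for every prime `p` of height at most `1`. -/
def SerreR1 (R : Type) [CommRing R] : Prop :=
  ∀ (p : Ideal R) [p.IsPrime], ringKrullDim (Localization.AtPrime p) ≤ 1 →
    IsRegularLocal (Localization.AtPrime p)

/-- The `i`-th local cohomology `H^i_m(M)` of `M` with support in the maximal ideal,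
as a type. -/
abbrev localCohMod (R : Type) [CommRing R] [IsLocalRing R] (i : ℕ)
    (M : Type) [AddCommGroup M] [Module R M] : Type :=
  ↥((localCohomology (maximalIdeal R) i).obj (ModuleCat.of R M))

/-- `x : Fin d → R` is a system of parameters for the local ring `(R, m)`:
`d = dim R`, all `x i` lie in `m`, and the ideal they generate is `m`-primary
(its radical is `m`). -/
def IsSystemOfParameters (R : Type) [CommRing R] [IsLocalRing R] {d : ℕ}
    (x : Fin d → R) : Prop :=
  (d : WithBot (WithTop ℕ)) = ringKrullDim R ∧ (∀ i, x i ∈ maximalIdeal R) ∧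
    (Ideal.span (Set.range x)).radical = maximalIdeal R

/-- `E` is an injective hull of the residue field of the local ring `R`:
`E` is injective and contains a copy of `R/m` as an essential submodule. -/
def IsInjectiveHullOfResidueField (R : Type) [CommRing R] [IsLocalRing R]
    (E : Type) [AddCommGroup E] [Module R E] : Prop :=
  Module.Injective R E ∧ ∃ f : ResidueField R →ₗ[R] E, Function.Injective f ∧
    ∀ N : Submodule R E, N ≠ ⊥ → N ⊓ LinearMap.range f ≠ ⊥

section Bridge

theorem homology_smul_iff {R : Type} [CommRing R] (S : ShortComplex (ModuleCat.{0} R)) (r : R) :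
    (∀ e : S.homology, r • e = 0) ↔ ∀ x : S.X₂, S.g.hom x = 0 → ∃ y : S.X₁, S.f.hom y = r • x := by
  let e1 : S.homology ≃ₗ[R] (LinearMap.ker S.g.hom ⧸ LinearMap.range S.moduleCatToCycles) :=
    S.moduleCatHomologyIso.toLinearEquiv
  have h1 : (∀ e : S.homology, r • e = 0) ↔
    ∀ e : (LinearMap.ker S.g.hom ⧸ LinearMap.range S.moduleCatToCycles), r • e = 0 := by
    constructor
    · intro h e
      have := h (e1.symm e)
      rw [← map_smul, LinearEquiv.map_eq_zero_iff] at this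
      exact this
    · intro h e
      have := h (e1 e)
      rw [← map_smul, LinearEquiv.map_eq_zero_iff] at this
      exact this
  rw [h1]
  constructor
  · intro h x hx
    have := h (Submodule.Quotient.mk ⟨x, hx⟩)
    rw [← Submodule.Quotient.mk_smul, Submodule.Quotient.mk_eq_zero] at this
    obtain ⟨y, hy⟩ := this
    exact ⟨y, congrArg Subtype.val hy⟩
  · intro h e
    obtain ⟨⟨x, hx⟩, rfl⟩ := Submodule.Quotient.mk_surjective _ e
    rw [← Submodule.Quotient.mk_smul, Submodule.Quotient.mk_eq_zero]
    obtain ⟨y, hy⟩ := h x hx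
    exact ⟨y, Subtype.ext hy⟩

theorem oldExt_iff {R : Type} [CommRing R] (X Y : ModuleCat.{0} R) (n : ℕ) (r : R)
    (P : ProjectiveResolution X) :
    (∀ e : ↥(((Ext R (ModuleCat.{0} R) (n+1)).obj (Opposite.op X)).obj Y), r • e = 0) ↔
      ∀ f : P.complex.X (n+1) ⟶ Y, P.complex.d (n+2) (n+1) ≫ f = 0 →
        ∃ g : P.complex.X n ⟶ Y, P.complex.d (n+1) n ≫ g = r • f := by
  let K := P.complex.linearYonedaObj R Y
  let e1 := (P.isoExt (R := R) (n+1) Y ≪≫ (K.homologyIsoSc' n (n+1) (n+2) (by simp) (by simp))).toLinearEquiv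
  have h1 : (∀ e : ↥(((Ext R (ModuleCat.{0} R) (n+1)).obj (Opposite.op X)).obj Y), r • e = 0) ↔
    ∀ e : (K.sc' n (n+1) (n+2)).homology, r • e = 0 := by
    constructor
    · intro h e
      have := h (e1.symm e)
      rw [← map_smul, LinearEquiv.map_eq_zero_iff] at this
      exact this
    · intro h e
      have := h (e1 e)
      rw [← map_smul, LinearEquiv.map_eq_zero_iff] at this
      exact this
  rw [h1, homology_smul_iff]
  exact Iff.rfl

theorem oldExt_zero {R : Type} [CommRing R] (X Y : ModuleCat.{0} R)
    (h : ∀ f : X ⟶ Y, f = 0) :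
    Subsingleton ↥(((Ext R (ModuleCat.{0} R) 0).obj (Opposite.op X)).obj Y) := by
  let P := projectiveResolution X
  let K := P.complex.linearYonedaObj R Y
  let e1 := (P.isoExt (R := R) 0 Y ≪≫ (K.homologyIsoSc' 0 0 1 (by simp) (by simp))).toLinearEquiv
  suffices h1 : ∀ e : (K.sc' 0 0 1).homology, (1 : R) • e = 0 by
    refine subsingleton_of_forall_eq 0 fun e => ?_
    have := h1 (e1 e)
    rwa [one_smul, LinearEquiv.map_eq_zero_iff] at this
  rw [homology_smul_iff]
  intro x hx
  have hx' : P.complex.d 1 0 ≫ (show P.complex.X 0 ⟶ Y from x) = 0 := hx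
  have : (show P.complex.X 0 ⟶ Y from x) = 0 := by
    have hex := P.exact₀
    have hepi : Epi (P.π.f 0) := inferInstance
    have hd := (hex.gIsCokernel)
    obtain ⟨l, hl⟩ := Limits.CokernelCofork.IsColimit.desc' hd (show P.complex.X 0 ⟶ Y from x) hx'
    have hl0 : l = 0 := h l
    rw [← hl, hl0]
    exact Limits.comp_zero
  refine ⟨0, ?_⟩
  rw [map_zero, one_smul]
  exact this.symm
theorem newExt_iff {R : Type} [CommRing R] (X Y : ModuleCat.{0} R) (n : ℕ) (r : R)
    (P : ProjectiveResolution X) :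
    (∀ e : Abelian.Ext X Y (n+1), r • e = 0) ↔
      ∀ f : P.complex.X (n+1) ⟶ Y, P.complex.d (n+2) (n+1) ≫ f = 0 →
        ∃ g : P.complex.X n ⟶ Y, P.complex.d (n+1) n ≫ g = r • f := by
  have key : ∀ f : P.complex.X (n+1) ⟶ Y, ∀ hf : P.complex.d (n+2) (n+1) ≫ f = 0,
      r • P.extMk f (n+2) rfl hf = 0 ↔ ∃ g : P.complex.X n ⟶ Y, P.complex.d (n+1) n ≫ g = r • f := by
    intro f hf
    rw [Abelian.Ext.smul_eq_comp_mk₀, P.extMk_comp_mk₀, P.extMk_eq_zero_iff _ _ _ _ n rfl]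
    simp
  constructor
  · intro h f hf
    exact (key f hf).1 (h _)
  · intro h e
    obtain ⟨f, hf, rfl⟩ := P.extMk_surjective e (n+2) rfl
    exact (key f hf).2 (h f hf)

theorem oldExt_newExt {R : Type} [CommRing R] (X Y : ModuleCat.{0} R) (n : ℕ) (r : R) :
    (∀ e : ↥(((Ext R (ModuleCat.{0} R) (n+1)).obj (Opposite.op X)).obj Y), r • e = 0) ↔
    (∀ e : Abelian.Ext X Y (n+1), r • e = 0) := by
  rw [oldExt_iff X Y n r (projectiveResolution X), newExt_iff X Y n r (projectiveResolution X)]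

theorem oldExt_subsingleton {R : Type} [CommRing R] (X Y : ModuleCat.{0} R) (n : ℕ) :
    Subsingleton ↥(((Ext R (ModuleCat.{0} R) (n+1)).obj (Opposite.op X)).obj Y) ↔
    Subsingleton (Abelian.Ext X Y (n+1)) := by
  have := oldExt_newExt X Y n 1
  simp only [one_smul] at this
  rw [subsingleton_iff_forall_eq 0, subsingleton_iff_forall_eq 0, this]

end Bridge

section ExtLayer

abbrev EV (R : Type) [CommRing R] (M : Type) [AddCommGroup M] [Module R M] (i : ℕ) : Prop :=
  Subsingleton (Abelian.Ext (ModuleCat.of R M) (ModuleCat.of R R) i)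

variable {R : Type} [CommRing R] {M' M M'' : Type} [AddCommGroup M'] [AddCommGroup M]
  [AddCommGroup M''] [Module R M'] [Module R M] [Module R M'']

theorem ses_shortExact (f : M' →ₗ[R] M) (g : M →ₗ[R] M'') (hf : Function.Injective f)
    (hfg : Function.Exact f g) (hg : Function.Surjective g) :
    (ModuleCat.shortComplexOfCompEqZero f g (hfg.linearMap_comp_eq_zero)).ShortExact :=
  ModuleCat.shortComplex_shortExact _ hfg hf hg

theorem EV_mid (f : M' →ₗ[R] M) (g : M →ₗ[R] M'') (hf : Function.Injective f)
    (hfg : Function.Exact f g) (hg : Function.Surjective g) (i : ℕ)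
    (h1 : EV R M' i) (h2 : EV R M'' i) : EV R M i := by
  have hS := ses_shortExact f g hf hfg hg
  refine subsingleton_of_forall_eq 0 fun e => ?_
  obtain ⟨x, hx⟩ := Abelian.Ext.contravariant_sequence_exact₂ hS (ModuleCat.of R R) e
    (h1.elim _ _)
  rw [← hx, show x = 0 from h2.elim _ _, Abelian.Ext.comp_zero]

theorem EV_left (f : M' →ₗ[R] M) (g : M →ₗ[R] M'') (hf : Function.Injective f)
    (hfg : Function.Exact f g) (hg : Function.Surjective g) (i : ℕ)
    (h1 : EV R M i) (h2 : EV R M'' (i+1)) : EV R M' i := by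
  have hS := ses_shortExact f g hf hfg hg
  refine subsingleton_of_forall_eq 0 fun e => ?_
  obtain ⟨x, hx⟩ := Abelian.Ext.contravariant_sequence_exact₁ hS (ModuleCat.of R R) e
    (add_comm 1 i) (h2.elim _ _)
  rw [← hx, show x = 0 from h1.elim _ _, Abelian.Ext.comp_zero]

theorem EV_right (f : M' →ₗ[R] M) (g : M →ₗ[R] M'') (hf : Function.Injective f)
    (hfg : Function.Exact f g) (hg : Function.Surjective g) (i : ℕ)
    (h1 : EV R M' i) (h2 : EV R M (i+1)) : EV R M'' (i+1) := by
  have hS := ses_shortExact f g hf hfg hg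
  refine subsingleton_of_forall_eq 0 fun e => ?_
  obtain ⟨x, hx⟩ := Abelian.Ext.contravariant_sequence_exact₃ hS (ModuleCat.of R R) e
    (h2.elim _ _) (add_comm 1 i)
  rw [← hx, show x = 0 from h1.elim _ _, Abelian.Ext.comp_zero]

theorem EV_congr (e : M ≃ₗ[R] M') (i : ℕ) (h : EV R M i) : EV R M' i := by
  refine subsingleton_of_forall_eq 0 fun x => ?_
  have h1 : (Abelian.Ext.mk₀ (e.toModuleIso.hom)).comp x (zero_add i) = 0 := h.elim _ _
  have h2 : (Abelian.Ext.mk₀ (e.toModuleIso.inv)).comp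
     ((Abelian.Ext.mk₀ (e.toModuleIso.hom)).comp x (zero_add i)) (zero_add i) = x := by
    rw [Abelian.Ext.mk₀_comp_mk₀_assoc, Iso.inv_hom_id, Abelian.Ext.mk₀_id_comp]
  rw [← h2, h1, Abelian.Ext.comp_zero]

theorem EV_proj [Module.Projective R M] (i : ℕ) : EV R M (i+1) := by
  have : Projective (ModuleCat.of R M) := (ModuleCat.of R M).projective_of_categoryTheory_projective
  exact subsingleton_of_forall_eq 0 fun x => Abelian.Ext.eq_zero_of_projective _

theorem EV_zero_iff : EV R M 0 ↔ ∀ f : M →ₗ[R] R, f = 0 := by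
  have e := (Abelian.Ext.linearEquiv₀ (R := R) (X := ModuleCat.of R M) (Y := ModuleCat.of R R)).trans
    ModuleCat.homLinearEquiv
  rw [EV, e.toEquiv.subsingleton_congr]
  exact subsingleton_iff_forall_eq 0

abbrev lsm (y : R) (M : Type) [AddCommGroup M] [Module R M] : M →ₗ[R] M := LinearMap.lsmul R M y

theorem lsm_exact (y : R) : Function.Exact (lsm y M) (LinearMap.range (lsm y M)).mkQ := by
  rw [LinearMap.exact_iff, Submodule.ker_mkQ]

theorem EV_nak [IsNoetherianRing R] [IsLocalRing R] [Module.Finite R M] (y : R)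
    (hy : y ∈ maximalIdeal R) (hr : Function.Injective (lsm y M)) (i : ℕ)
    (h : EV R (M ⧸ LinearMap.range (lsm y M)) (i+1)) : EV R M i := by
  have hS := ses_shortExact (lsm y M) _ hr (lsm_exact y) (Submodule.mkQ_surjective _)
  have key : ∀ e : Abelian.Ext (ModuleCat.of R M) (ModuleCat.of R R) i, ∃ e', y • e' = e := by
    intro e
    obtain ⟨x, hx⟩ := Abelian.Ext.contravariant_sequence_exact₁ hS (ModuleCat.of R R) e
      (add_comm 1 i) (h.elim _ _)
    refine ⟨x, ?_⟩
    rw [← hx]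
    have : (ModuleCat.ofHom (lsm y M)) = y • 𝟙 (ModuleCat.of R M) := by
      ext; simp
    change _ = (Abelian.Ext.mk₀ (ModuleCat.ofHom (lsm y M))).comp x _
    rw [this, Abelian.Ext.mk₀_smul, Abelian.Ext.smul_comp, Abelian.Ext.mk₀_id_comp]
  have : Module.Finite R (Abelian.Ext (ModuleCat.of R M) (ModuleCat.of R R) i) :=
    ModuleCat.finite_ext R _ _ i
  have := Submodule.eq_bot_of_le_smul_of_le_jacobson_bot (maximalIdeal R)
    (⊤ : Submodule R (Abelian.Ext (ModuleCat.of R M) (ModuleCat.of R R) i)) this.fg_top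
    (fun e _ => by
      obtain ⟨e', rfl⟩ := key e
      exact Submodule.smul_mem_smul hy trivial)
    (IsLocalRing.maximalIdeal_le_jacobson _)
  exact subsingleton_of_forall_eq 0 fun x => (Submodule.mem_bot R).1 (this ▸ trivial)

theorem EV_tors (y : R) (hr : Function.Injective (lsm y M)) (i : ℕ)
   (h : EV R M i) (h' : EV R M (i+1)) : EV R (M ⧸ LinearMap.range (lsm y M)) (i+1) :=
  EV_right (lsm y M) _ hr (lsm_exact y) (Submodule.mkQ_surjective _) i h h'

end ExtLayer

section Gor

variable {R : Type} [CommRing R] [IsLocalRing R] [IsNoetherianRing R]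

def PV (R : Type) [CommRing R] (i : ℕ) : Prop :=
  ∀ (N : Type) [AddCommGroup N] [Module R N] [Module.Finite R N], EV R N i

theorem EV_subsing (N : Type) [AddCommGroup N] [Module R N] [Subsingleton N] (i : ℕ) : EV R N i := by
  cases i with
  | zero => exact EV_zero_iff.2 fun f => by ext x; rw [Subsingleton.elim x 0]; simp
  | succ i =>
    exact EV_proj i

theorem PV_of_k (i : ℕ) (h1 : PV R (i+1)) (h2 : EV R (R ⧸ maximalIdeal R) i) : PV R i := by
  intro N _ _ hN
  induction hN using IsNoetherianRing.induction_on_isQuotientEquivQuotientPrime R with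
  | subsingleton N => exact EV_subsing N i
  | quotient N p e =>
    refine EV_congr e.symm i ?_
    by_cases hp : p.1 = maximalIdeal R
    · rw [hp]; exact h2
    · have hle : p.1 ≤ maximalIdeal R := IsLocalRing.le_maximalIdeal p.2.ne_top
      obtain ⟨y, hy, hyp⟩ := SetLike.exists_of_lt (lt_of_le_of_ne hle hp)
      refine EV_nak y hy ?_ i (h1 _)
      rw [injective_iff_map_eq_zero]
      intro a ha
      obtain ⟨a, rfl⟩ := Ideal.Quotient.mk_surjective a
      have : (Ideal.Quotient.mk p.1) (y * a) = 0 := ha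
      rw [Ideal.Quotient.eq_zero_iff_mem] at this ⊢
      exact (p.2.mem_or_mem this).resolve_left hyp
  | exact N1 N2 N3 f g hf hg hfg h1 h3 => exact EV_mid f g hf hfg hg i h1 h3

/-- extension of homs. -/
theorem EV_extend {R : Type} [CommRing R] {M' M M'' : Type} [AddCommGroup M'] [AddCommGroup M]
    [AddCommGroup M''] [Module R M'] [Module R M] [Module R M'']
    (f : M' →ₗ[R] M) (g : M →ₗ[R] M'') (hf : Function.Injective f)
    (hfg : Function.Exact f g) (hg : Function.Surjective g) 
    (h : EV R M'' 1) (φ : M' →ₗ[R] R) : ∃ ψ : M →ₗ[R] R, ψ ∘ₗ f = φ := by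
  have hS := ses_shortExact f g hf hfg hg
  obtain ⟨x, hx⟩ := Abelian.Ext.contravariant_sequence_exact₁ hS (ModuleCat.of R R)
    (Abelian.Ext.mk₀ (ModuleCat.ofHom φ)) (n₁ := 1) rfl (h.elim _ _)
  obtain ⟨ψ, rfl⟩ := (Abelian.Ext.mk₀_bijective _ _).2 x
  rw [Abelian.Ext.mk₀_comp_mk₀] at hx
  have := (Abelian.Ext.mk₀_bijective _ _).1 hx
  exact ⟨ψ.hom, congrArg ModuleCat.Hom.hom this⟩

theorem exists_colon (x : R) (p : Ideal R)
    (hp : p ∈ (Ideal.span {x}).minimalPrimes) : 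
    ∃ a : R, a ∉ Ideal.span {x} ∧ ∀ b ∈ p, a * b ∈ Ideal.span {x} := by
  have : p ∈ associatedPrimes R (R ⧸ Ideal.span {x}) := by
    apply Module.associatedPrimes.minimalPrimes_annihilator_subset_associatedPrimes
    rwa [Ideal.annihilator_quotient]
  rw [AssociatedPrimes.mem_iff, isAssociatedPrime_iff] at this
  obtain ⟨hpp, z, hz⟩ := this
  obtain ⟨a, rfl⟩ := Ideal.Quotient.mk_surjective z
  refine ⟨a, fun ha => hpp.ne_top ?_, fun b hb => ?_⟩
  · rw [hz, Ideal.Quotient.eq_zero_iff_mem.2 ha, Ideal.eq_top_iff_one]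
    simp
  · rw [hz] at hb
    have : b • (Ideal.Quotient.mk (Ideal.span {x})) a = 0 := by simpa using hb
    rw [mul_comm]
    exact Ideal.Quotient.eq_zero_iff_mem.1 this

theorem not_PV_two (hdim : ringKrullDim R = 2) (x : R) (hx : x ∈ nonZeroDivisors R)
    (hxm : x ∈ maximalIdeal R) : ¬ PV R 2 := by
  intro hP
  obtain ⟨p, hp, hple⟩ := Ideal.exists_minimalPrimes_le (I := Ideal.span {x}) (J := maximalIdeal R)
    (by simpa [Ideal.span_le] using hxm)
  have hpp : p.IsPrime := hp.1.1
  have hpm : p ≠ maximalIdeal R := by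
    intro h
    have h1 : p.height ≤ 1 := Ideal.height_le_one_of_isPrincipal_of_mem_minimalPrimes _ p hp
    have h2 := IsLocalRing.maximalIdeal_height_eq_ringKrullDim (R := R)
    rw [← h, hdim] at h2
    have : p.height = 2 := WithBot.coe_injective h2
    rw [this] at h1
    exact absurd h1 (by decide)
  obtain ⟨y, hy, hyp⟩ := SetLike.exists_of_lt (lt_of_le_of_ne hple hpm)
  have hE : EV R (R ⧸ p) 1 := by
    refine EV_nak y hy ?_ 1 (hP _)
    rw [injective_iff_map_eq_zero]
    intro a ha
    obtain ⟨a, rfl⟩ := Ideal.Quotient.mk_surjective a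
    have : (Ideal.Quotient.mk p) (y * a) = 0 := ha
    rw [Ideal.Quotient.eq_zero_iff_mem] at this ⊢
    exact (hpp.mem_or_mem this).resolve_left hyp
  obtain ⟨a, ha, hap⟩ := exists_colon x p hp
  have hch : ∀ b : p, ∃ c, a * b = x * c := fun b => by
    obtain ⟨c, hc⟩ := Ideal.mem_span_singleton.1 (hap b b.2)
    exact ⟨c, hc⟩
  choose φ hφ using hch
  have hcancel : ∀ a b : R, x * a = x * b → a = b := fun a b h => by
    exact (mul_cancel_left_mem_nonZeroDivisors hx).1 h
  let φ' : p →ₗ[R] R :=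
    { toFun := φ
      map_add' := fun b c => hcancel _ _ (by rw [← hφ, mul_add, ← hφ, ← hφ]; push_cast; ring)
      map_smul' := fun r b => hcancel _ _ (by
        rw [← hφ]; simp only [RingHom.id_apply, smul_eq_mul, SetLike.val_smul]
        linear_combination r * hφ b) }
  obtain ⟨ψ, hψ⟩ := EV_extend (p.subtype) (Submodule.mkQ p) (Submodule.injective_subtype p)
    (by rw [LinearMap.exact_iff, Submodule.ker_mkQ, Submodule.range_subtype])
    (Submodule.mkQ_surjective p) hE φ'
  have hxp : x ∈ p := hp.1.2 (Ideal.mem_span_singleton_self x)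
  have h1 : ψ x = φ ⟨x, hxp⟩ := LinearMap.congr_fun hψ ⟨x, hxp⟩
  have h2 : ψ x = x * ψ 1 := by
    rw [← smul_eq_mul, ← map_smul, smul_eq_mul, mul_one]
  apply ha
  have h3 := hφ ⟨x, hxp⟩
  rw [← h1, h2] at h3
  refine Ideal.mem_span_singleton.2 ⟨ψ 1, hcancel _ _ ?_⟩
  linear_combination h3

theorem exists_reg_of_EV (r : ℕ) (hk : ¬ EV R (R ⧸ maximalIdeal R) r) (hP : PV R (r+1))
    (M : Type) [AddCommGroup M] [Module R M] [Module.Finite R M] (hM : EV R M r) :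
    ∃ y ∈ maximalIdeal R, IsSMulRegular M y := by
  have : Subsingleton ((R ⧸ maximalIdeal R) →ₗ[R] M) := by
    refine subsingleton_of_forall_eq 0 fun f => ?_
    by_contra hf
    have hsimp : IsSimpleModule R (R ⧸ maximalIdeal R) :=
      isSimpleModule_iff_quot_maximal.2 ⟨_, IsLocalRing.maximalIdeal.isMaximal R, ⟨LinearEquiv.refl _ _⟩⟩
    have hinj := LinearMap.injective_of_ne_zero hf
    exact hk (EV_left f (LinearMap.range f).mkQ hinj
      (by rw [LinearMap.exact_iff, Submodule.ker_mkQ]) (Submodule.mkQ_surjective _) r hM (hP _))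
  obtain ⟨y, hy, hr⟩ := IsSMulRegular.subsingleton_linearMap_iff.1 this
  exact ⟨y, by rwa [Ideal.annihilator_quotient] at hy, hr⟩

theorem supportDim_lsm (M : Type) [AddCommGroup M] [Module R M] [Module.Finite R M] (x : R)
    (hx : x ∈ maximalIdeal R) (hr : IsSMulRegular M x) :
    Module.supportDim R (M ⧸ LinearMap.range (lsm x M)) + 1 = Module.supportDim R M := by
  rw [← Module.supportDim_quotSMulTop_succ_eq_supportDim_mem_jacobson hr
    (IsLocalRing.maximalIdeal_le_jacobson _ hx)]
  congr 1
  apply Module.supportDim_eq_of_equiv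
  refine Submodule.quotEquivOfEq _ _ ?_
  ext m
  simp [Submodule.mem_smul_pointwise_iff_exists]

theorem exists_pow_of_supportDim (M : Type) [AddCommGroup M] [Module R M] [Module.Finite R M]
    [Nontrivial M] (h : Module.supportDim R M ≤ 0) :
    ∃ k, maximalIdeal R ^ k ≤ Module.annihilator R M := by
  rw [Module.supportDim_eq_ringKrullDim_quotient_annihilator] at h
  have h0 : Ring.KrullDimLE 0 (R ⧸ Module.annihilator R M) := (Ring.krullDimLE_iff).2 h
  have hle : maximalIdeal R ≤ (Module.annihilator R M).radical := by
    rw [Ideal.radical_eq_sInf]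
    refine le_sInf ?_
    rintro p ⟨hp, hpp⟩
    have hp' : (p.map (Ideal.Quotient.mk (Module.annihilator R M))).IsPrime :=
      Ideal.map_isPrime_of_surjective Ideal.Quotient.mk_surjective (by simpa using hp)
    have hmax := Ideal.isMaximal_of_isPrime
      (p.map (Ideal.Quotient.mk (Module.annihilator R M)))
    have := Ideal.comap_isMaximal_of_surjective (Ideal.Quotient.mk (Module.annihilator R M))
      Ideal.Quotient.mk_surjective (K := p.map (Ideal.Quotient.mk (Module.annihilator R M)))
    rw [Ideal.comap_map_mk hp] at this
    rw [IsLocalRing.eq_maximalIdeal this]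
  exact Ideal.exists_pow_le_of_le_radical_of_fg hle (IsNoetherian.noetherian _)

theorem gor_main [IsReduced R] (hdim : ringKrullDim R = 2) (hfin : ∃ n, ∀ i, n < i → PV R i) :
    PV R 3 ∧ ∃ x ∈ maximalIdeal R, ∃ w ∈ maximalIdeal R, x ∈ nonZeroDivisors R ∧
      (∀ a b, w * a = x * b → ∃ c, a = x * c) ∧
      ∃ k, maximalIdeal R ^ k ≤ Ideal.span {x, w} := by
  have hx : ∃ x ∈ maximalIdeal R, x ∈ nonZeroDivisors R := by
    by_contra! hcon
    have := Ideal.bot_lt_annihilator_of_disjoint_nonZeroDivisors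
      (I := maximalIdeal R) (Set.disjoint_left.2 fun x hx => hcon x hx)
    obtain ⟨a, ha, ha0⟩ := SetLike.exists_of_lt this
    rw [Submodule.mem_annihilator] at ha
    by_cases hu : IsUnit a
    · have hm : maximalIdeal R = ⊥ := by
        rw [eq_bot_iff]
        intro z hz
        exact (hu.mul_right_eq_zero).1 (ha z hz)
      have hF := IsLocalRing.isField_iff_maximalIdeal_eq.2 hm
      have := ringKrullDim_eq_zero_of_isField hF
      rw [this] at hdim
      exact absurd hdim (by decide)
    · have h2 : a * a = 0 := ha a ((IsLocalRing.mem_maximalIdeal a).2 hu)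
      exact ha0 (by simpa using (IsReduced.eq_zero a ⟨2, by rw [sq, h2]⟩))
  obtain ⟨x, hxm, hxn⟩ := hx
  have h2 := not_PV_two hdim x hxn hxm
  -- maximal r
  obtain ⟨n, hn⟩ := hfin
  obtain ⟨r, hr1, hr2⟩ : ∃ r, ¬ PV R r ∧ ∀ i, r < i → PV R i := by
    classical
    let Q := fun i => ∀ j, i < j → PV R j
    have hQ : ∃ i, Q i := ⟨n, hn⟩
    refine ⟨Nat.find hQ, fun h => ?_, Nat.find_spec hQ⟩
    rcases Nat.eq_zero_or_pos (Nat.find hQ) with h0 | h0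
    · exact h2 (Nat.find_spec hQ 2 (by omega))
    · refine Nat.find_min hQ (m := Nat.find hQ - 1) (by omega) fun j hj => ?_
      rcases Nat.lt_or_ge (Nat.find hQ) j with h3 | h3
      · exact Nat.find_spec hQ j h3
      · rwa [show j = Nat.find hQ by omega]
  have hr : 2 ≤ r := by
    by_contra h
    exact h2 (hr2 2 (by omega))
  have hk : ¬ EV R (R ⧸ maximalIdeal R) r := fun h => hr1 (PV_of_k r (hr2 _ (by omega)) h)
  have hRx : Function.Injective (lsm x R) := fun a b h => by
    exact (mul_cancel_left_mem_nonZeroDivisors hxn).1 h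
  let S := R ⧸ LinearMap.range (lsm x R)
  have hS : ∀ i, EV R S (i+2) := fun i => EV_tors x hRx (i+1) (EV_proj _) (EV_proj _)
  obtain ⟨w, hwm, hw⟩ := exists_reg_of_EV r hk (hr2 _ (by omega)) S (by
    obtain ⟨i, rfl⟩ := Nat.exists_eq_add_of_le' hr
    exact hS i)
  have hSw : Function.Injective (lsm w S) := hw
  let T := S ⧸ LinearMap.range (lsm w S)
  have hT : ∀ i, EV R T (i+3) := fun i => EV_tors w hSw (i+2) (hS _) (hS _)
  have hJ : Module.annihilator R T ≤ Ideal.span {x, w} := by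
    intro t ht
    rw [Module.mem_annihilator] at ht
    have h1 := ht (Submodule.Quotient.mk (Submodule.Quotient.mk (1 : R)))
    rw [← Submodule.Quotient.mk_smul, ← Submodule.Quotient.mk_smul, smul_eq_mul, mul_one,
      Submodule.Quotient.mk_eq_zero] at h1
    obtain ⟨s, hs⟩ := h1
    obtain ⟨s, rfl⟩ := Submodule.Quotient.mk_surjective _ s
    have hs' : (Submodule.Quotient.mk (w * s) : S) = Submodule.Quotient.mk t := hs
    rw [Submodule.Quotient.eq] at hs'
    obtain ⟨c, hc⟩ := hs'
    have hc' : x * c = w * s - t := hc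
    rw [Ideal.mem_span_pair]
    exact ⟨-c, s, by linear_combination -hc'⟩
  have hJm : Ideal.span {x, w} ≤ maximalIdeal R := by
    rw [Ideal.span_le]; rintro z (rfl | rfl) <;> assumption
  have hTn : Nontrivial T := by
    by_contra h
    rw [not_nontrivial_iff_subsingleton] at h
    have : Module.annihilator R T = ⊤ := Module.annihilator_eq_top_iff.2 h
    rw [this] at hJ
    exact (IsLocalRing.maximalIdeal.isMaximal R).ne_top (top_le_iff.1 (hJ.trans hJm))
  have hpow : ∃ k, maximalIdeal R ^ k ≤ Module.annihilator R T := by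
    apply exists_pow_of_supportDim
    have e1 := supportDim_lsm S w hwm hw
    have e2 := supportDim_lsm R x hxm hRx
    rw [Module.supportDim_self_eq_ringKrullDim, hdim] at e2
    rw [← e1] at e2
    change Module.supportDim R T + 1 + 1 = 2 at e2
    generalize Module.supportDim R T = d at e2
    induction d using WithBot.recBotCoe with
    | bot => exact bot_le
    | coe d =>
      have e3 : d + 1 + 1 = 2 := WithBot.coe_injective e2
      have : d = 0 := by
        induction d using ENat.recTopCoe with
        | top => exact absurd e3 (by decide)
        | coe d => 
          norm_cast at e3 ⊢
          omega
      rw [this]; rfl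
  refine ⟨?_, x, hxm, w, hwm, hxn, ?_, ?_⟩
  · by_contra h3
    have hr3 : 3 ≤ r := by
      by_contra h
      exact h3 (hr2 3 (by omega))
    obtain ⟨y, hym, hy⟩ := exists_reg_of_EV r hk (hr2 _ (by omega)) T (by
      obtain ⟨i, rfl⟩ := Nat.exists_eq_add_of_le' hr3
      exact hT i)
    obtain ⟨k, hk⟩ := hpow
    have h4 := hy.pow k
    obtain ⟨t, ht⟩ := exists_ne (0 : T)
    apply ht
    apply h4
    change y ^ k • t = y ^ k • 0
    rw [smul_zero]
    exact Module.mem_annihilator.1 (hk (Ideal.pow_mem_pow hym k)) t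
  · intro a b hab
    have : lsm w S (Submodule.Quotient.mk a) = 0 := by
      change (Submodule.Quotient.mk (w * a) : S) = 0
      rw [Submodule.Quotient.mk_eq_zero, hab]
      exact ⟨b, rfl⟩
    have h5 := (injective_iff_map_eq_zero _).1 hSw _ this
    rw [Submodule.Quotient.mk_eq_zero] at h5
    obtain ⟨c, hc⟩ := h5
    exact ⟨c, hc.symm⟩
  · obtain ⟨k, hk⟩ := hpow
    exact ⟨k, hk.trans hJ⟩

end Gor

section S2

variable {R : Type} [CommRing R] [IsNoetherianRing R]

/-- common denominators of f.g. submodules of the fraction ring -/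
theorem exists_denom (N : Submodule R (FractionRing R)) (hN : N.FG) :
    ∃ c ∈ nonZeroDivisors R, ∀ z ∈ N, ∃ r : R, algebraMap R (FractionRing R) r = c • z := by
  obtain ⟨s, rfl⟩ := hN
  obtain ⟨⟨c, hc⟩, h⟩ := IsLocalization.exist_integer_multiples_of_finset (nonZeroDivisors R) s
  refine ⟨c, hc, fun z hz => ?_⟩
  induction hz using Submodule.span_induction with
  | mem z hz => exact h z hz
  | zero => exact ⟨0, by simp⟩
  | add a b _ _ ha hb =>
    obtain ⟨r, hr⟩ := ha
    obtain ⟨s, hs⟩ := hb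
    exact ⟨r + s, by rw [map_add, hr, hs, smul_add]⟩
  | smul t a _ ha =>
    obtain ⟨r, hr⟩ := ha
    exact ⟨t * r, by rw [map_mul, hr, ← Algebra.smul_def, smul_comm]⟩

theorem S2_base (x w : R) (hx : x ∈ nonZeroDivisors R)
    (hreg : ∀ a b, w * a = x * b → ∃ c, a = x * c) (u : FractionRing R)
    (h1 : ∃ r : R, algebraMap R (FractionRing R) r = algebraMap R _ x * u)
    (h2 : ∃ r : R, algebraMap R (FractionRing R) r = algebraMap R _ w * u) :
    ∃ r : R, algebraMap R (FractionRing R) r = u := by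
  obtain ⟨a, ha⟩ := h1
  obtain ⟨b, hb⟩ := h2
  have hinj := IsFractionRing.injective R (FractionRing R)
  obtain ⟨c, hc⟩ := hreg a b (hinj (by rw [map_mul, map_mul, ha, hb]; ring))
  refine ⟨c, ?_⟩
  have hu : IsUnit (algebraMap R (FractionRing R) x) := IsLocalization.map_units _ ⟨x, hx⟩
  apply hu.mul_left_cancel
  rw [← ha, hc, map_mul]

theorem S2_lemma (x w : R) (hx : x ∈ nonZeroDivisors R)
    (hreg : ∀ a b, w * a = x * b → ∃ c, a = x * c) (z : FractionRing R)
    (h1 : IsIntegral R (algebraMap R _ x * z)) (h2 : IsIntegral R (algebraMap R _ w * z)) :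
    IsIntegral R z := by
  set X := algebraMap R (FractionRing R) x
  set W := algebraMap R (FractionRing R) w
  let C := Algebra.adjoin R {X * z, W * z}
  have hC : C.toSubmodule.FG := fg_adjoin_of_finite (by simp) (by
    rintro y (rfl | rfl) <;> assumption)
  obtain ⟨c, hc, h⟩ := exists_denom _ hC
  set c' := algebraMap R (FractionRing R) c
  have key : ∀ n i j : ℕ, ∃ r : R, algebraMap R (FractionRing R) r = c' * (X ^ i * W ^ j * z ^ (i + j + n)) := by
    intro n
    induction n with
    | zero =>
      intro i j
      have hm : (X * z) ^ i * (W * z) ^ j ∈ C := mul_mem (pow_mem (Algebra.subset_adjoin (by simp)) _)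
        (pow_mem (Algebra.subset_adjoin (by simp)) _)
      obtain ⟨r, hr⟩ := h ((X * z) ^ i * (W * z) ^ j) hm
      refine ⟨r, ?_⟩
      rw [hr, Algebra.smul_def]
      ring
    | succ n ih =>
      intro i j
      apply S2_base x w hx hreg
      · obtain ⟨r, hr⟩ := ih (i+1) j
        exact ⟨r, by rw [hr]; ring⟩
      · obtain ⟨r, hr⟩ := ih i (j+1)
        exact ⟨r, by rw [hr]; ring⟩
  refine IsAlmostIntegral.isIntegral_of_nonZeroDivisors_le_comap ?_ ?_
  · exact ⟨c, hc, fun n => by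
      obtain ⟨r, hr⟩ := key n 0 0
      exact ⟨r, by rw [hr, Algebra.smul_def]; simp [c']⟩⟩
  · intro r hr
    exact (IsLocalization.map_units (FractionRing R) ⟨r, hr⟩).mem_nonZeroDivisors

end S2

section ComplNoeth

theorem compl_noeth (R : Type) [CommRing R] [IsNoetherianRing R] (I : Ideal R) :
    IsNoetherianRing (AdicCompletion I R) := by
  classical
  obtain ⟨s, hs⟩ := (isNoetherianRing_iff_ideal_fg R).mp inferInstance I
  let σ : Type := s
  let P := MvPolynomial σ R
  let J : Ideal P := MvPolynomial.idealOfVars σ R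
  let ev : P →+* R := (MvPolynomial.aeval (fun t : σ => (t : R)) : P →ₐ[R] R).toRingHom
  have hevC : ∀ r : R, ev (MvPolynomial.C r) = r := fun r => by
    show MvPolynomial.aeval _ (MvPolynomial.C r) = r
    simp
  have hJ : J.map ev = I := by
    show (Ideal.span _).map ev = I
    rw [Ideal.map_span, ← hs]
    congr 1
    ext r
    simp only [Set.mem_image, Set.mem_range]
    constructor
    · rintro ⟨_, ⟨t, rfl⟩, rfl⟩
      have : ev (MvPolynomial.X t) = (t : R) := by
        show MvPolynomial.aeval _ (MvPolynomial.X t) = _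
        simp
      rw [this]; exact t.2
    · intro hr
      refine ⟨_, ⟨⟨r, hr⟩, rfl⟩, ?_⟩
      show MvPolynomial.aeval _ (MvPolynomial.X _) = _
      simp
  have hJn : ∀ n, J ^ n ≤ (I ^ n).comap ev := fun n => by
    rw [← Ideal.map_le_iff_le_comap, Ideal.map_pow, hJ]
  let Q := AdicCompletion J P
  have hQ : IsNoetherianRing Q :=
    isNoetherianRing_of_ringEquiv (MvPowerSeries σ R)
      (MvPowerSeries.toAdicCompletionAlgEquiv σ R).toRingEquiv
  let f : (n : ℕ) → Q →+* R ⧸ I ^ n := fun n =>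
    (Ideal.quotientMap (I ^ n) ev (hJn n)).comp (AdicCompletion.evalₐ J n).toRingHom
  have hf : ∀ {m n : ℕ} (hle : m ≤ n), (Ideal.Quotient.factorPow I hle).comp (f n) = f m := by
    intro m n hle
    ext q
    induction q using AdicCompletion.induction_on with
    | _ q =>
    simp only [f, RingHom.comp_apply]
    show _ = (Ideal.quotientMap (I ^ m) ev (hJn m)) (AdicCompletion.evalₐ J m _)
    show (Ideal.Quotient.factorPow I hle) ((Ideal.quotientMap (I ^ n) ev (hJn n)) (AdicCompletion.evalₐ J n _)) = _
    rw [AdicCompletion.evalₐ_mk, AdicCompletion.evalₐ_mk]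
    rw [Ideal.quotientMap_mk, Ideal.quotientMap_mk]
    show Ideal.Quotient.mk _ _ = _
    rw [Ideal.Quotient.eq, ← map_sub]
    apply hJn m
    have := q.2 hle
    rw [SModEq.sub_mem] at this
    rw [← neg_sub]
    exact neg_mem (by simpa using this)
  let φ : Q →+* AdicCompletion I R := AdicCompletion.liftRingHom I f hf
  have hφ : ∀ p : P, φ (algebraMap P Q p) = algebraMap R (AdicCompletion I R) (ev p) := by
    intro p
    apply AdicCompletion.ext_evalₐ
    intro n
    rw [AdicCompletion.evalₐ_liftRingHom]
    show (Ideal.quotientMap (I ^ n) ev (hJn n)) (AdicCompletion.evalₐ J n (algebraMap P Q p)) = _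
    rw [AlgHom.commutes, AlgHom.commutes]
    exact Ideal.quotientMap_mk
  let J' : Ideal Q := J.map (algebraMap P Q)
  have hJ' : J'.map φ = I.map (algebraMap R (AdicCompletion I R)) := by
    have h1 : φ.comp (algebraMap P Q) = (algebraMap R (AdicCompletion I R)).comp ev :=
      RingHom.ext hφ
    rw [Ideal.map_map, h1, ← Ideal.map_map, hJ]
  have hI : I.FG := ⟨s, hs⟩
  have : IsAdicComplete J' Q := AdicCompletion.isAdicComplete_self _ (MvPolynomial.idealOfVars_fg σ R)
  have : IsAdicComplete (J'.map φ) (AdicCompletion I R) := by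
    rw [hJ']; exact AdicCompletion.isAdicComplete_self _ hI
  have hsurj : Function.Surjective φ := by
    apply surjective_of_mk_map_comp_surjective (I := J')
    intro y
    obtain ⟨a, rfl⟩ := Ideal.Quotient.mk_surjective y
    obtain ⟨r, hr⟩ := Ideal.Quotient.mk_surjective (AdicCompletion.evalOneₐ I a)
    refine ⟨algebraMap P Q (MvPolynomial.C r), ?_⟩
    rw [RingHom.comp_apply, hφ, hevC, Ideal.Quotient.eq, hJ', ← AdicCompletion.ker_evalOneₐ_eq_map _ hI,
      RingHom.mem_ker]
    show AdicCompletion.evalOneₐ I _ = 0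
    rw [map_sub, ← hr, sub_eq_zero, AlgHom.commutes]
    rfl
  exact isNoetherianRing_of_surjective _ _ φ hsurj

end ComplNoeth

section Sep

theorem sep_dim1 {G : Type*} [CommRing G] [IsDomain G] [IsNoetherianRing G] (x : G) (n : Ideal G)
    (hn : n ∈ (Ideal.span {x}).minimalPrimes) (c : G) (hc : c ≠ 0) :
    ∃ (k : ℕ) (s e : G), s ∉ n ∧ c * e = s * x ^ k := by
  have hnp : n.IsPrime := hn.1.1
  have hht := Ideal.height_le_one_of_isPrincipal_of_mem_minimalPrimes _ n hn
  by_contra hcon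
  push Not at hcon
  have hdis : Disjoint ((Ideal.span {c} : Ideal G) : Set G) (n.primeCompl ⊔ Submonoid.powers x : Submonoid G) := by
    rw [Set.disjoint_left]
    intro y hy hy'
    obtain ⟨e, rfl⟩ := Ideal.mem_span_singleton'.mp hy
    obtain ⟨s, hs, z, ⟨k, rfl⟩, h⟩ := Submonoid.mem_sup.mp hy'
    exact hcon k s e hs (by rw [mul_comm, ← h])
  obtain ⟨p, hp, hcp, hd⟩ := Ideal.exists_le_prime_disjoint _ _ hdis
  have hpn : p < n := by
    refine lt_of_le_of_ne (fun y hy => ?_) ?_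
    · by_contra hyn
      exact Set.disjoint_left.mp hd hy (Submonoid.mem_sup_left hyn)
    · rintro rfl
      have hxp : x ∈ p := hn.1.2 (Ideal.mem_span_singleton_self x)
      exact Set.disjoint_left.mp hd hxp (Submonoid.mem_sup_right (Submonoid.mem_powers x))
  have h0p : (⊥ : Ideal G) < p := by
    refine bot_lt_iff_ne_bot.mpr ?_
    rintro rfl
    exact hc (by simpa using hcp)
  have h1 := Ideal.height_add_one_le_of_lt_of_isPrime hpn
  have h2 := Ideal.height_add_one_le_of_lt_of_isPrime h0p
  have : (1 : ℕ∞) + 1 ≤ 1 := by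
    calc (1 : ℕ∞) + 1 ≤ (0 + 1) + 1 := by simp
      _ ≤ ((⊥ : Ideal G).height + 1) + 1 := by gcongr; simp
      _ ≤ p.height + 1 := by gcongr
      _ ≤ n.height := h1
      _ ≤ 1 := hht
  norm_num at this

theorem sep_int {A D : Type*} [CommRing A] [CommRing D] [IsDomain D] (f : A →+* D) (hf : f.IsIntegral)
    (y : D) (hy : y ≠ 0) : ∃ c : A, f c ≠ 0 ∧ y ∣ f c := by
  have hy1 : IsIntegral f.range y := by
    obtain ⟨p, hp, h⟩ := hf y
    refine ⟨p.map f.rangeRestrict, hp.map _, ?_⟩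
    rw [Polynomial.eval₂_map]
    exact h
  have := Ideal.comap_ne_bot_of_integral_mem (I := Ideal.span {y}) hy (Ideal.mem_span_singleton_self y) hy1
  obtain ⟨⟨_, ⟨c, rfl⟩⟩, hz, hz0⟩ := Submodule.exists_mem_ne_zero_of_ne_bot this
  refine ⟨c, fun h => hz0 (Subtype.ext h), ?_⟩
  exact Ideal.mem_span_singleton.mp hz

theorem sep_dom {A D : Type*} (L : Type*) [Field L] [CommRing A] [IsLocalRing A] [IsNoetherianRing A] [CommRing D] [IsDomain D]
    [Algebra D L] [IsFractionRing D L]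
    (f : A →+* D) (hf : f.IsIntegral) (x w : A) (hx : x ∈ maximalIdeal A) (hx0 : f x ≠ 0)
    (hxw : ∀ N g, f (x ^ N) ≠ f (w * g)) (y : D)
    (hy : ∀ n, y ∈ (Ideal.span {f x, f w}) ^ n) : y = 0 := by
  let φ : A →+* L := (algebraMap D L).comp f
  let _ : Algebra A L := φ.toAlgebra
  have hφx : φ x ≠ 0 := fun h => hx0 (IsFractionRing.injective D L (by simpa [φ] using h))
  let t : L := φ w / φ x
  have ht : t * φ x = φ w := div_mul_cancel₀ _ hφx
  let G := Algebra.adjoin A {t}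
  have hG : IsNoetherianRing G := isNoetherianRing_of_fg (Subalgebra.fg_adjoin_finset {t} |> fun h => by simpa using h)
  let xG : G := algebraMap A G x
  have hxnu : ¬ IsUnit xG := by
    intro hu
    obtain ⟨⟨e, he⟩, hxe⟩ := hu.exists_right_inv
    have hxe' : φ x * e = 1 := congrArg Subtype.val hxe
    have he' : e ∈ Algebra.adjoin A {t} := he
    rw [Algebra.adjoin_singleton_eq_range_aeval] at he'
    obtain ⟨p, rfl⟩ := he'
    -- x^N * p(t) = φ(p0 x^N + w g)
    have key : ∀ p : Polynomial A, ∃ N g, φ x ^ N * Polynomial.aeval t p = φ (p.coeff 0 * x ^ N + w * g) := by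
      intro p
      induction p using Polynomial.induction_on' with
      | add p q hp hq =>
        obtain ⟨N, g, h⟩ := hp
        obtain ⟨N', g', h'⟩ := hq
        refine ⟨N + N', x ^ N' * g + x ^ N * g', ?_⟩
        rw [map_add, mul_add, pow_add]
        calc _ = φ x ^ N' * (φ x ^ N * Polynomial.aeval t p) + φ x ^ N * (φ x ^ N' * Polynomial.aeval t q) := by ring
          _ = _ := by
            rw [h, h', Polynomial.coeff_add]
            simp only [map_add, map_mul, map_pow]; ring
      | monomial n a =>
        refine ⟨n, if n = 0 then 0 else a * w ^ (n - 1), ?_⟩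
        have h2 : (Polynomial.aeval t) (Polynomial.monomial n a) = φ a * t ^ n := Polynomial.aeval_monomial t
        rw [h2]
        have h1 : φ x ^ n * (φ a * t ^ n) = φ a * φ w ^ n := by rw [← ht]; ring
        rw [h1]
        rcases n with _ | n
        · simp
        · simp [Polynomial.coeff_monomial]; ring
    obtain ⟨N, g, h⟩ := key p
    have h3 : φ (x ^ N * (1 - p.coeff 0 * x)) = φ (w * (x * g)) := by
      have : φ x * (φ x ^ N * Polynomial.aeval t p) = φ x ^ N := by
        calc _ = φ x ^ N * (φ x * Polynomial.aeval t p) := by ring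
          _ = φ x ^ N := by
            have : φ x * Polynomial.aeval t p = 1 := hxe'
            rw [this, mul_one]
      rw [h] at this
      simp only [map_add, map_mul, map_pow, map_sub, map_one] at this ⊢
      linear_combination -this
    have h4 : IsUnit (1 - p.coeff 0 * x) := by
      apply IsLocalRing.isUnit_one_sub_self_of_mem_nonunits
      exact (maximalIdeal A).mul_mem_left _ hx
    obtain ⟨v, hv⟩ := h4.exists_right_inv
    apply hxw N (x * g * v)
    have h5 := IsFractionRing.injective D L h3
    calc f (x ^ N) = f (x ^ N * (1 - p.coeff 0 * x)) * f v := by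
          rw [← map_mul, mul_assoc, hv, mul_one]
      _ = _ := by rw [h5, ← map_mul]; ring_nf
  have hspan : Ideal.span {xG} ≠ ⊤ := by rwa [Ne, Ideal.span_singleton_eq_top]
  obtain ⟨m, hm, hle⟩ := Ideal.exists_le_maximal _ hspan
  obtain ⟨n, hn, -⟩ := Ideal.exists_minimalPrimes_le hle
  have hnp : n.IsPrime := hn.1.1
  let C := Localization.AtPrime n
  let ψ : C →+* L := IsLocalization.lift (M := n.primeCompl) (g := G.val.toRingHom) (by
    rintro ⟨s, hs⟩
    have : s ≠ 0 := by rintro rfl; exact hs n.zero_mem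
    refine IsUnit.mk0 _ (fun h => this (Subtype.ext h)))
  have hψ : ∀ g : G, ψ (algebraMap G C g) = (g : L) := fun g => IsLocalization.lift_eq _ g
  obtain ⟨V, hV, hloc⟩ := IsLocalRing.exists_factor_valuationRing ψ
  have hGV : ∀ g : G, (g : L) ∈ V := fun g => by rw [← hψ]; exact hV _
  have hAV : ∀ a : A, φ a ∈ V := fun a => hGV (algebraMap A G a)
  -- units
  have hunit : ∀ g : G, (∃ z ∈ V, (g : L) * z = 1) → g ∉ n := by
    rintro g ⟨z, hz, hgz⟩ hgn
    have h1 : IsUnit (ψ.codRestrict V.toSubring hV (algebraMap G C g)) := by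
      refine IsUnit.of_mul_eq_one ⟨z, hz⟩ (Subtype.ext ?_)
      show ψ _ * z = 1
      rw [hψ, hgz]
    have h2 := hloc.map_nonunit _ h1
    rw [IsLocalization.AtPrime.isUnit_to_map_iff C n] at h2
    exact h2 hgn
  have hunit' : ∀ s : G, s ∉ n → ∃ z ∈ V, (s : L) * z = 1 := by
    intro s hs
    obtain ⟨z, hz⟩ := (IsLocalization.map_units C (⟨s, hs⟩ : n.primeCompl)).exists_right_inv
    refine ⟨ψ z, hV z, ?_⟩
    rw [← hψ, ← map_mul, hz, map_one]
  -- D in V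
  have hDV : ∀ d : D, algebraMap D L d ∈ V := by
    intro d
    obtain ⟨p, hp, hpd⟩ := hf d
    have : IsIntegral V (algebraMap D L d) := by
      refine ⟨p.map (φ.codRestrict V.toSubring hAV), hp.map _, ?_⟩
      rw [Polynomial.eval₂_map]
      have h1 : (algebraMap V L).comp (φ.codRestrict V.toSubring hAV) = (algebraMap D L).comp f := rfl
      rw [h1, ← Polynomial.hom_eval₂, hpd, map_zero]
    obtain ⟨v, hv⟩ := IsIntegrallyClosed.isIntegral_iff.mp this
    rw [← hv]; exact v.2
  by_contra hy0
  obtain ⟨c, hc0, ⟨y', hy'⟩⟩ := sep_int f hf y hy0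
  have hcG : algebraMap A G c ≠ 0 := by
    intro h
    apply hc0
    apply IsFractionRing.injective D L
    rw [map_zero]
    exact congrArg Subtype.val h
  obtain ⟨k, s, e, hs, hce⟩ := sep_dim1 xG n hn _ hcG
  have hce' : φ c * (e : L) = (s : L) * φ x ^ k := congrArg Subtype.val hce
  have hyV : ∃ v ∈ V, algebraMap D L y = φ x ^ (k + 1) * v := by
    let δ : D →+* V := (algebraMap D L).codRestrict V.toSubring hDV
    have h1 : δ y ∈ ((Ideal.span {f x, f w}) ^ (k + 1)).map δ := Ideal.mem_map_of_mem _ (hy (k + 1))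
    have h2 : (Ideal.span {f x, f w}).map δ ≤ Ideal.span {δ (f x)} := by
      rw [Ideal.map_span, Ideal.span_le]
      rintro _ ⟨z, (rfl | rfl), rfl⟩
      · exact Ideal.mem_span_singleton_self _
      · refine Ideal.mem_span_singleton'.mpr ⟨⟨t, hGV ⟨t, Algebra.self_mem_adjoin_singleton _ _⟩⟩, ?_⟩
        exact Subtype.ext ht
    rw [Ideal.map_pow] at h1
    have h3 := Ideal.pow_right_mono h2 (k + 1) h1
    rw [Ideal.span_singleton_pow, Ideal.mem_span_singleton] at h3
    obtain ⟨v, hv⟩ := h3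
    exact ⟨v, v.2, congrArg Subtype.val hv⟩
  obtain ⟨v, hv, hyv⟩ := hyV
  obtain ⟨z, hz, hsz⟩ := hunit' s hs
  refine hunit xG ⟨v * algebraMap D L y' * e * z, ?_, ?_⟩ (hn.1.2 (Ideal.mem_span_singleton_self _))
  · exact mul_mem (mul_mem (mul_mem hv (hDV _)) (hGV e)) hz
  · show φ x * _ = 1
    have h6 : φ c = algebraMap D L y * algebraMap D L y' := by
      rw [← map_mul, ← hy']; rfl
    rw [h6, hyv] at hce'
    apply mul_left_cancel₀ (pow_ne_zero k hφx)
    calc _ = (φ x ^ (k + 1) * v * (algebraMap D L) y' * ↑e) * z := by ring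
      _ = φ x ^ k * (s * z) := by rw [hce']; ring
      _ = _ := by rw [hsz]

theorem sep_nzd {A : Type*} [CommRing A] [IsLocalRing A] [IsNoetherianRing A]
    (x w : A) (hx : x ∈ maximalIdeal A) (hw : w ∈ maximalIdeal A) (hx0 : x ∈ nonZeroDivisors A)
    (hreg : ∀ a b, w * a = x * b → ∃ c, a = x * c) (N : ℕ) (g : A) :
    x ^ N - w * g ∈ nonZeroDivisors A := by
  have hx0' : ∀ a, x * a = 0 → a = 0 := fun a h => (mem_nonZeroDivisors_iff.mp hx0).1 a h
  have hbot : ∀ (T : Ideal A) (y : A), y ∈ maximalIdeal A → (∀ a ∈ T, ∃ b ∈ T, a = y * b) → T = ⊥ := by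
    intro T y hy h
    refine Submodule.eq_bot_of_le_smul_of_le_jacobson_bot (Ideal.span {y}) T (IsNoetherian.noetherian T) ?_ ?_
    · intro a ha
      obtain ⟨b, hb, rfl⟩ := h a ha
      exact Submodule.smul_mem_smul (Ideal.mem_span_singleton_self y) hb
    · rw [IsLocalRing.jacobson_eq_maximalIdeal _ bot_ne_top]
      rwa [Ideal.span_singleton_le_iff_mem]
  have hker : ∀ r : A, ∀ a, a ∈ LinearMap.ker (LinearMap.lsmul A A r) ↔ r * a = 0 := fun r a => by
    simp
  have hw0 : ∀ a, w * a = 0 → a = 0 := by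
    have := hbot (LinearMap.ker (LinearMap.lsmul A A w)) x hx (by
      intro a ha
      rw [hker] at ha
      obtain ⟨c, rfl⟩ := hreg a 0 (by rw [ha, mul_zero])
      refine ⟨c, (hker _ _).mpr ?_, rfl⟩
      apply hx0'
      rw [← ha]; ring)
    intro a ha
    have h : a ∈ LinearMap.ker (LinearMap.lsmul A A w) := (hker _ _).mpr ha
    rw [this] at h
    exact h
  have hdiv : ∀ (N : ℕ) (a h : A), x ^ N * a = w * h → ∃ b, a = w * b := by
    intro N
    induction N with
    | zero => intro a h e; exact ⟨h, by simpa using e⟩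
    | succ N ih =>
      intro a h e
      obtain ⟨c, rfl⟩ := hreg h (x ^ N * a) (by rw [← e]; ring)
      apply ih a c
      have : x * (x ^ N * a - w * c) = 0 := by linear_combination e
      exact sub_eq_zero.mp (hx0' _ this)
  have := hbot (LinearMap.ker (LinearMap.lsmul A A (x ^ N - w * g))) w hw (by
      intro a ha
      rw [hker] at ha
      obtain ⟨b, rfl⟩ := hdiv N a (g * a) (by linear_combination ha)
      refine ⟨b, (hker _ _).mpr ?_, rfl⟩
      apply hw0
      rw [← ha]; ring)
  rw [mem_nonZeroDivisors_iff_right]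
  intro a ha
  have h : a ∈ LinearMap.ker (LinearMap.lsmul A A (x ^ N - w * g)) := (hker _ _).mpr (by rw [mul_comm]; exact ha)
  rw [this] at h
  exact h

theorem sep_main {A U : Type*} [CommRing A] [IsLocalRing A] [IsNoetherianRing A] [IsReduced A]
    [CommRing U] [Algebra A U] [Algebra.IsIntegral A U] (hinj : Function.Injective (algebraMap A U))
    (x w : A) (hx : x ∈ maximalIdeal A) (hw : w ∈ maximalIdeal A) (hx0 : x ∈ nonZeroDivisors A)
    (hreg : ∀ a b, w * a = x * b → ∃ c, a = x * c)
    (hden : ∀ u : U, ∃ c : A, (∀ u' : U, c • u' = 0 → u' = 0) ∧ ∃ α, c • u = algebraMap A U α)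
    (y : U) (hy : ∀ n, y ∈ (Ideal.span {algebraMap A U x, algebraMap A U w}) ^ n) : y = 0 := by
  obtain ⟨c, hc, α, hα⟩ := hden y
  suffices α = 0 by
    apply hc; rw [hα, this, map_zero]
  have hmem : α ∈ nilradical A := by
    rw [nilradical, ← Ideal.sInf_minimalPrimes, Submodule.mem_sInf]
    intro (q : Ideal A) hq
    have hqp : q.IsPrime := hq.1.1
    have hdisj := Ideal.disjoint_nonZeroDivisors_of_mem_minimalPrimes hq
    obtain ⟨q', -, hq'p, hq'⟩ := Ideal.exists_ideal_over_prime_of_isIntegral (S := U) q ⊥ (by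
      rw [← RingHom.ker_eq_comap_bot, (RingHom.injective_iff_ker_eq_bot _).mp hinj]; exact bot_le)
    have hker : ∀ a, (Ideal.Quotient.mk q') (algebraMap A U a) = 0 ↔ a ∈ q := fun a => by
      rw [Ideal.Quotient.eq_zero_iff_mem, ← hq']; rfl
    let f : A →+* U ⧸ q' := (Ideal.Quotient.mk q').comp (algebraMap A U)
    have hf : f.IsIntegral := RingHom.IsIntegral.trans _ _ (algebraMap_isIntegral_iff.mpr inferInstance)
      (RingHom.isIntegral_of_surjective _ Ideal.Quotient.mk_surjective)
    have hn : ∀ a, a ∈ nonZeroDivisors A → f a ≠ 0 := fun a ha h =>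
      Set.disjoint_left.mp hdisj ((hker a).mp h) ha
    have := sep_dom (FractionRing (U ⧸ q')) f hf x w hx (hn x hx0) (fun N g h => hn _ (sep_nzd x w hx hw hx0 hreg N g) (by
      rw [map_sub, h, sub_self])) (Ideal.Quotient.mk q' y) (by
        intro n
        have h1 := Ideal.mem_map_of_mem (Ideal.Quotient.mk q') (hy n)
        rw [Ideal.map_pow, Ideal.map_span, Set.image_pair] at h1
        exact h1)
    rw [← hker, ← hα, Algebra.smul_def, map_mul, this, mul_zero]
  rw [nilradical_eq_zero] at hmem
  simpa using hmem

end Sep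

section KA

variable {C U : Type*} [CommRing C] [AddCommGroup U] [Module C U]

def ell (P Q : Submodule C U) : ℕ∞ := Module.length C (Q.map P.mkQ)

theorem ell_add {P Q T : Submodule C U} (h1 : P ≤ Q) (h2 : Q ≤ T) : ell P T = ell P Q + ell Q T := by
  let g0 : U ⧸ P →ₗ[C] U ⧸ Q := P.mapQ Q LinearMap.id h1
  have hg0 : ∀ u : U, g0 (P.mkQ u) = Q.mkQ u := fun u => rfl
  let g : (T.map P.mkQ) →ₗ[C] (T.map Q.mkQ) := g0.restrict (by
    rintro _ ⟨u, hu, rfl⟩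
    exact ⟨u, hu, (hg0 u).symm⟩)
  let f : (Q.map P.mkQ) →ₗ[C] (T.map P.mkQ) := Submodule.inclusion (Submodule.map_mono h2)
  refine Module.length_eq_add_of_exact f g (Submodule.inclusion_injective _) ?_ ?_
  · rintro ⟨_, ⟨u, hu, rfl⟩⟩
    exact ⟨⟨P.mkQ u, ⟨u, hu, rfl⟩⟩, rfl⟩
  · rintro ⟨_, ⟨u, hu, rfl⟩⟩
    constructor
    · intro h
      have h' : Q.mkQ u = 0 := congrArg Subtype.val h
      rw [Submodule.mkQ_apply, Submodule.Quotient.mk_eq_zero] at h'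
      exact ⟨⟨P.mkQ u, ⟨u, h', rfl⟩⟩, rfl⟩
    · rintro ⟨⟨_, ⟨v, hv, rfl⟩⟩, h⟩
      have h' : P.mkQ v = P.mkQ u := congrArg Subtype.val h
      apply Subtype.ext
      show g0 (P.mkQ u) = 0
      rw [← h', hg0, Submodule.mkQ_apply, Submodule.Quotient.mk_eq_zero]
      exact hv

theorem ell_map (μ : U →ₗ[C] U) (hμ : Function.Injective μ) (P Q : Submodule C U) :
    ell (P.map μ) (Q.map μ) = ell P Q := by
  have hle : P ≤ (P.map μ).comap μ := Submodule.le_comap_map _ _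
  let g : U ⧸ P →ₗ[C] U ⧸ (P.map μ) := P.mapQ (P.map μ) μ hle
  have hg : Function.Injective g := by
    rw [← LinearMap.ker_eq_bot]
    show (P.mapQ (P.map μ) μ hle).ker = ⊥
    rw [Submodule.ker_mapQ, Submodule.comap_map_eq_of_injective hμ, Submodule.mkQ_map_self]
  have h1 : (Q.map μ).map (P.map μ).mkQ = (Q.map P.mkQ).map g := by
    rw [← Submodule.map_comp, ← Submodule.map_comp]
    rfl
  unfold ell
  rw [h1]
  exact (Submodule.equivMapOfInjective g hg _).symm.length_eq

theorem length_ne_top_of_artin (I : Ideal C) [IsArtinianRing (C ⧸ I)] (W : Type*) [AddCommGroup W]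
    [Module C W] [Module.Finite C W] (h : ∀ i ∈ I, ∀ u : W, i • u = 0) : Module.length C W ≠ ⊤ := by
  let _ : Module (C ⧸ I) W := Module.IsTorsionBySet.module (I := I) (fun u i => h i.1 i.2 u)
  have : IsScalarTower C (C ⧸ I) W := Module.IsTorsionBySet.isScalarTower (I := I) (fun u i => h i.1 i.2 u)
  have : Module.Finite (C ⧸ I) W := Module.Finite.of_restrictScalars_finite C _ _
  rw [Module.length_eq_of_surjective (R := C ⧸ I) (S := C) Ideal.Quotient.mk_surjective]
  exact Module.length_ne_top

theorem ell_ne_top {P Q : Submodule C U} (hQ : Q.FG)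
    (h : ∃ I : Ideal C, IsArtinianRing (C ⧸ I) ∧ ∀ i ∈ I, ∀ n ∈ Q, i • n ∈ P) : ell P Q ≠ ⊤ := by
  obtain ⟨I, hI, h⟩ := h
  have : Module.Finite C (Q.map P.mkQ) := Module.Finite.iff_fg.mpr (hQ.map _)
  refine length_ne_top_of_artin I _ ?_
  rintro i hi ⟨_, ⟨u, hu, rfl⟩⟩
  apply Subtype.ext
  show i • P.mkQ u = 0
  rw [← map_smul, Submodule.mkQ_apply, Submodule.Quotient.mk_eq_zero]
  exact h i hi u hu

theorem KA (x : C) (hx : ∀ u : U, x • u = 0 → u = 0) (F : Submodule C U) (hF : F.FG)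
    (hFx : ∃ I : Ideal C, IsArtinianRing (C ⧸ I) ∧ ∀ i ∈ I, ∀ n ∈ F, i • n ∈ F.map (LinearMap.lsmul C U x))
    (hN : ∀ N : Submodule C U, N.FG → F ≤ N → 
      ∃ I : Ideal C, IsArtinianRing (C ⧸ I) ∧ ∀ i ∈ I, ∀ n ∈ N, i • n ∈ F) :
    Module.Finite C (U ⧸ LinearMap.range (LinearMap.lsmul C U x)) := by
  set μ := LinearMap.lsmul C U x
  have hμ : Function.Injective μ := by
    rw [← LinearMap.ker_eq_bot, LinearMap.ker_eq_bot']
    exact hx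
  have hle : ∀ N : Submodule C U, N.map μ ≤ N := by
    rintro N _ ⟨u, hu, rfl⟩
    exact N.smul_mem x hu
  have hb := ell_ne_top hF hFx
  have key : ∀ N : Submodule C U, N.FG → F ≤ N → ell (N.map μ) N = ell (F.map μ) F := by
    intro N hNf hFN
    have h1 := ell_add (hle F) hFN
    have h2 := ell_add (Submodule.map_mono hFN) (hle N) (P := F.map μ)
    rw [ell_map μ hμ, h1, add_comm] at h2
    exact (WithTop.add_left_inj (ell_ne_top hNf (hN N hNf hFN))).mp h2 |>.symm
  let b := ell (F.map μ) F
  have bound : ∀ T : Submodule C (U ⧸ LinearMap.range μ), T.FG → Order.height T ≤ b := by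
    classical
    rintro T ⟨S, rfl⟩
    have hsurj := (LinearMap.range μ).mkQ_surjective
    let N0 : Submodule C U := Submodule.span C (S.image (Function.surjInv hsurj) : Finset U)
    have hN0 : Submodule.span C (S : Set (U ⧸ LinearMap.range μ)) = N0.map (LinearMap.range μ).mkQ := by
      rw [Submodule.map_span, Finset.coe_image, ← Set.image_comp]
      congr 1
      have : ((LinearMap.range μ).mkQ ∘ Function.surjInv hsurj) = id := by
        ext u; exact Function.surjInv_eq hsurj u
      erw [this]
      simp
    rw [hN0]
    let N := N0 ⊔ F
    have hNfg : N.FG := Submodule.FG.sup ⟨_, rfl⟩ hF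
    rw [← Module.length_submodule]
    have h1 : N0.map (LinearMap.range μ).mkQ ≤ N.map (LinearMap.range μ).mkQ := Submodule.map_mono le_sup_left
    refine (Module.length_le_of_injective (Submodule.inclusion h1) (Submodule.inclusion_injective h1)).trans ?_
    have h2 : ell (N.map μ) N = b := key N hNfg le_sup_right
    rw [← h2]
    have h3 : N.map μ ≤ LinearMap.range μ := LinearMap.map_le_range
    let g0 : U ⧸ (N.map μ) →ₗ[C] U ⧸ LinearMap.range μ := (N.map μ).mapQ (LinearMap.range μ) LinearMap.id h3
    let g : (N.map (N.map μ).mkQ) →ₗ[C] (N.map (LinearMap.range μ).mkQ) := g0.restrict (by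
      rintro _ ⟨u, hu, rfl⟩
      exact ⟨u, hu, rfl⟩)
    refine Module.length_le_of_surjective g ?_
    rintro ⟨_, ⟨u, hu, rfl⟩⟩
    exact ⟨⟨(N.map μ).mkQ u, ⟨u, hu, rfl⟩⟩, rfl⟩
  have hfin : ∀ T : Submodule C (U ⧸ LinearMap.range μ), T.FG → Order.height T < ⊤ := fun T hT =>
    (bound T hT).trans_lt (lt_top_iff_ne_top.mpr hb)
  let s : Set ℕ := {n | ∃ T : Submodule C (U ⧸ LinearMap.range μ), T.FG ∧ (n : ℕ∞) = Order.height T}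
  have hs : s.Nonempty := by
    obtain ⟨n, hn⟩ := ENat.ne_top_iff_exists.mp (hfin ⊥ Submodule.fg_bot).ne
    exact ⟨n, ⊥, Submodule.fg_bot, hn⟩
  have hsb : BddAbove s := by
    obtain ⟨n, hn⟩ := ENat.ne_top_iff_exists.mp hb
    refine ⟨n, ?_⟩
    rintro k ⟨T, hT, hk⟩
    have := bound T hT
    rw [← hk] at this
    have h' : b = (n : ℕ∞) := hn.symm
    rw [h'] at this
    exact_mod_cast this
  obtain ⟨T, hT, hTn⟩ := Nat.sSup_mem hs hsb
  have htop : T = ⊤ := by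
    rw [eq_top_iff]
    intro u _
    by_contra hu
    have hlt : T < T ⊔ Submodule.span C {u} := by
      refine lt_of_le_of_ne le_sup_left (fun h => hu ?_)
      rw [h]
      exact Submodule.mem_sup_right (Submodule.mem_span_singleton_self u)
    have hfg : (T ⊔ Submodule.span C {u}).FG := hT.sup (Submodule.fg_span_singleton u)
    have h1 := Order.height_strictMono hlt (hfin T hT)
    obtain ⟨n, hn⟩ := ENat.ne_top_iff_exists.mp (hfin _ hfg).ne
    rw [← hn, ← hTn] at h1
    have h2 : n ≤ sSup s := le_csSup hsb ⟨_, hfg, hn⟩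
    exact absurd (by exact_mod_cast h1) (not_lt.mpr h2)
  exact ⟨htop ▸ hT⟩

end KA

section FinPart

variable {R : Type} [CommRing R] [IsLocalRing R] [IsNoetherianRing R]

theorem artin_of_primes {C : Type*} [CommRing C] [IsNoetherianRing C] (I : Ideal C)
    (h : ∀ p : Ideal C, p.IsPrime → I ≤ p → p.IsMaximal) : IsArtinianRing (C ⧸ I) := by
  rw [isArtinianRing_iff_isNoetherianRing_krullDimLE_zero]
  refine ⟨inferInstance, Ring.krullDimLE_zero_iff.mpr ?_⟩
  intro P hP
  have h1 := h (P.comap (Ideal.Quotient.mk I)) (Ideal.comap_isPrime _ _) (fun a ha => by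
    rw [Ideal.mem_comap, Ideal.Quotient.eq_zero_iff_mem.mpr ha]; exact P.zero_mem)
  have h2 := Ideal.map_comap_of_surjective _ (Ideal.Quotient.mk_surjective (I := I)) P
  rw [← h2]
  rcases Ideal.map_eq_top_or_isMaximal_of_surjective _ (Ideal.Quotient.mk_surjective (I := I)) h1 with h | h
  · exact absurd (h2 ▸ h) hP.ne_top
  · exact h

theorem artin_loc (hdim : ringKrullDim R = 2) (w c : R) (hw : w ∈ maximalIdeal R)
    (hc : c ∈ nonZeroDivisors R) :
    IsArtinianRing (Localization.Away w ⧸ Ideal.span {algebraMap R (Localization.Away w) c}) := by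
  have : IsNoetherianRing (Localization.Away w) := IsLocalization.isNoetherianRing (Submonoid.powers w) _ inferInstance
  apply artin_of_primes
  intro P hP hcP
  obtain ⟨Q, hQ, hPQ⟩ := Ideal.exists_le_maximal P hP.ne_top
  suffices P = Q by rwa [this]
  by_contra hne
  have hlt : P < Q := lt_of_le_of_ne hPQ hne
  have hQp := hQ.isPrime
  let φ := algebraMap R (Localization.Away w)
  have h1 : P.comap φ < Q.comap φ := by
    refine lt_of_le_of_ne (Ideal.comap_mono hPQ) (fun h => hne ?_)
    rw [← IsLocalization.map_under (Submonoid.powers w) (Localization.Away w) P, 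
      ← IsLocalization.map_under (Submonoid.powers w) (Localization.Away w) Q]
    exact congrArg _ h
  have h2 : Q.comap φ < maximalIdeal R := by
    refine lt_of_le_of_ne (IsLocalRing.le_maximalIdeal (Ideal.comap_isPrime φ Q).ne_top) (fun h => ?_)
    have : w ∈ Q.comap φ := h ▸ hw
    exact hQp.ne_top (Ideal.eq_top_of_isUnit_mem _ this (IsLocalization.Away.algebraMap_isUnit w))
  obtain ⟨p, hp, hpP⟩ := Ideal.exists_minimalPrimes_le (bot_le : (⊥ : Ideal R) ≤ P.comap φ)
  have h3 : p < P.comap φ := by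
    refine lt_of_le_of_ne hpP (fun h => ?_)
    have hcp : c ∈ p := by rw [h]; exact hcP (Ideal.mem_span_singleton_self _)
    exact Set.disjoint_left.mp (Ideal.disjoint_nonZeroDivisors_of_mem_minimalPrimes hp) hcp hc
  have hpp : p.IsPrime := hp.1.1
  have a1 := Ideal.height_add_one_le_of_lt_of_isPrime h1
  have a2 := Ideal.height_add_one_le_of_lt_of_isPrime h2
  have a3 := Ideal.height_add_one_le_of_lt_of_isPrime h3
  have a4 : ((maximalIdeal R).height : WithBot ℕ∞) = 2 := by
    rw [IsLocalRing.maximalIdeal_height_eq_ringKrullDim, hdim]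
  have a5 : (maximalIdeal R).height = 2 := WithBot.coe_injective a4
  rw [a5] at a2
  have : (3 : ℕ∞) ≤ 2 := by
    calc (3 : ℕ∞) = ((0 + 1) + 1) + 1 := by norm_num
      _ ≤ ((p.height + 1) + 1) + 1 := by gcongr; simp
      _ ≤ ((P.comap φ).height + 1) + 1 := by gcongr
      _ ≤ (Q.comap φ).height + 1 := by gcongr
      _ ≤ 2 := a2
  norm_num at this

theorem artin_loc2 (x w : R) (k n : ℕ) (h : maximalIdeal R ^ k ≤ Ideal.span {x, w}) :
    IsArtinianRing (R ⧸ Ideal.span {x, w ^ n}) := by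
  apply artin_of_primes
  intro p hp hI
  have h1 : maximalIdeal R ≤ p := by
    apply hp.le_of_pow_le (n := k)
    refine h.trans ?_
    rw [Ideal.span_le]
    rintro _ (rfl | rfl)
    · exact hI (Ideal.subset_span (by simp))
    · exact hp.mem_of_pow_mem n (hI (Ideal.subset_span (by simp)))
  rw [← (maximalIdeal.isMaximal R).eq_of_le hp.ne_top h1]
  infer_instance

theorem finset_denom {C U : Type*} [CommRing C] [AddCommGroup U] [Module C U] (S : Submonoid C)
    (F : Submodule C U) (h : ∀ u : U, ∃ c ∈ S, c • u ∈ F) (N : Submodule C U) (hN : N.FG) :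
    ∃ c ∈ S, ∀ u ∈ N, c • u ∈ F := by
  classical
  obtain ⟨s, rfl⟩ := hN
  have : ∃ c ∈ S, ∀ u ∈ s, c • u ∈ F := by
    induction s using Finset.induction_on with
    | empty => exact ⟨1, S.one_mem, by simp⟩
    | insert a s _ ih =>
      obtain ⟨c, hc, h1⟩ := ih
      obtain ⟨d, hd, h2⟩ := h a
      refine ⟨c * d, S.mul_mem hc hd, fun u hu => ?_⟩
      rcases Finset.mem_insert.mp hu with rfl | hu
      · rw [mul_smul]; exact F.smul_mem _ h2
      · rw [mul_comm, mul_smul]; exact F.smul_mem _ (h1 u hu)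
  obtain ⟨c, hc, h1⟩ := this
  refine ⟨c, hc, fun u hu => ?_⟩
  have : Submodule.span C (s : Set U) ≤ F.comap (LinearMap.lsmul C U c) := Submodule.span_le.mpr h1
  exact this hu

theorem fin_step1 (hdim : ringKrullDim R = 2) (x w : R) (hw : w ∈ maximalIdeal R)
    (hx : x ∈ nonZeroDivisors R) {B : Type} [CommRing B] [Algebra R B]
    (hxB : ∀ b : B, x • b = 0 → b = 0)
    (hden : ∀ b : B, ∃ c ∈ nonZeroDivisors R, ∃ r : R, c • b = algebraMap R B r) :
    ∃ F : Submodule R B, F.FG ∧ ∀ b : B, ∃ n : ℕ, ∃ f ∈ F, ∃ b' : B, w ^ n • b = f + x • b' := by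
  classical
  let S := Submonoid.powers w
  let C := Localization S
  let U := LocalizedModule S B
  let ι : B →ₗ[R] U := LocalizedModule.mkLinearMap S B
  have hxU : ∀ u : U, (algebraMap R C x) • u = 0 → u = 0 := by
    intro u hu
    rw [algebraMap_smul] at hu
    obtain ⟨⟨b, s⟩, h⟩ := IsLocalizedModule.surj S ι u
    have h' : s.1 • u = ι b := h
    have h1 : ι (x • b) = 0 := by rw [map_smul, ← h', smul_comm, hu, smul_zero]
    obtain ⟨t, ht⟩ := (IsLocalizedModule.eq_zero_iff S ι).mp h1
    have ht' : x • (t.1 • b) = 0 := by rw [smul_comm]; exact ht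
    have h2 : ι b = 0 := (IsLocalizedModule.eq_zero_iff S ι).mpr ⟨t, hxB _ ht'⟩
    rw [h2] at h'
    apply IsLocalizedModule.smul_injective ι s
    exact h'.trans (smul_zero _).symm
  let F : Submodule C U := Submodule.span C {ι 1}
  have hres := KA (algebraMap R C x) hxU F (Submodule.fg_span_singleton _)
    ⟨_, artin_loc hdim w x hw hx, by
      intro i hi n hn
      obtain ⟨j, rfl⟩ := Ideal.mem_span_singleton'.mp hi
      exact ⟨j • n, F.smul_mem _ hn, by rw [LinearMap.lsmul_apply, smul_smul, mul_comm]⟩⟩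
    (by
      intro N hN _
      obtain ⟨c, ⟨c0, hc0, rfl⟩, hc⟩ := finset_denom ((nonZeroDivisors R).map (algebraMap R C)) F (by
        intro u
        obtain ⟨⟨b, s⟩, h⟩ := IsLocalizedModule.surj S ι u
        have h' : s.1 • u = ι b := h
        obtain ⟨c, hc, r, hr⟩ := hden b
        refine ⟨_, ⟨c, hc, rfl⟩, ?_⟩
        have h1 : algebraMap R C s.1 • ((algebraMap R C c) • u) ∈ F := by
          rw [algebraMap_smul, algebraMap_smul, smul_comm, h', ← map_smul, hr, Algebra.algebraMap_eq_smul_one,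
            map_smul, ← algebraMap_smul C r]
          exact F.smul_mem _ (Submodule.mem_span_singleton_self _)
        obtain ⟨v, hv⟩ := (IsLocalization.map_units C s).exists_left_inv
        have h2 := F.smul_mem v h1
        rwa [smul_smul, hv, one_smul] at h2) N hN
      refine ⟨_, artin_loc hdim w c0 hw hc0, ?_⟩
      intro i hi n hn
      obtain ⟨j, rfl⟩ := Ideal.mem_span_singleton'.mp hi
      rw [mul_smul]
      exact F.smul_mem _ (hc n hn))
  let q := (LinearMap.range (LinearMap.lsmul C U (algebraMap R C x))).mkQ
  obtain ⟨g, hg⟩ := hres.fg_top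
  have hrep : ∀ v, ∃ b : B, ∃ s : S, ∃ u : U, q u = v ∧ s.1 • u = ι b := by
    intro v
    obtain ⟨u, rfl⟩ := Submodule.mkQ_surjective _ v
    obtain ⟨⟨b, s⟩, h⟩ := IsLocalizedModule.surj S ι u
    exact ⟨b, s, u, rfl, h⟩
  choose β σ υ h1 h2 using hrep
  let F0 : Submodule R B := Submodule.span R (g.image β : Finset B)
  let T : Submodule C U := 
    { carrier := {u | ∃ n : ℕ, ∃ f ∈ F0, ∃ b' : B, w ^ n • u = ι (f + x • b')}
      zero_mem' := ⟨0, 0, F0.zero_mem, 0, by simp⟩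
      add_mem' := by
        rintro u v ⟨n, f, hf, b', h⟩ ⟨n', f', hf', b'', h'⟩
        refine ⟨n + n', w ^ n' • f + w ^ n • f', F0.add_mem (F0.smul_mem _ hf) (F0.smul_mem _ hf'), 
          w ^ n' • b' + w ^ n • b'', ?_⟩
        have e1 : w ^ (n + n') • (u + v) = w ^ n' • (w ^ n • u) + w ^ n • (w ^ n' • v) := by
          rw [smul_add, smul_smul, smul_smul, pow_add, mul_comm (w ^ n')]
        rw [e1, h, h', ← map_smul, ← map_smul, ← map_add]
        congr 1
        simp only [smul_add, smul_comm x]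
        abel
      smul_mem' := by
        rintro c u ⟨n, f, hf, b', h⟩
        obtain ⟨⟨r, ⟨_, k, rfl⟩⟩, hc⟩ := IsLocalization.surj S c
        refine ⟨n + k, r • f, F0.smul_mem _ hf, r • b', ?_⟩
        have e1 : w ^ (n + k) • (c • u) = r • (w ^ n • u) := by
          have hc' : algebraMap R C (w ^ k) * c = algebraMap R C r := by rw [mul_comm]; exact hc
          rw [pow_add, mul_smul, ← algebraMap_smul C (w ^ k), smul_smul, hc', algebraMap_smul, smul_comm]
        rw [e1, h, ← map_smul, smul_add, smul_comm x] }
  have hsw : ∀ s : S, ∃ k : ℕ, s.1 = w ^ k := by rintro ⟨_, k, rfl⟩; exact ⟨k, rfl⟩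
  have hxT : LinearMap.range (LinearMap.lsmul C U (algebraMap R C x)) ≤ T := by
    rintro _ ⟨u, rfl⟩
    obtain ⟨⟨b, s⟩, h⟩ := IsLocalizedModule.surj S ι u
    have h' : s.1 • u = ι b := h
    obtain ⟨k, hk⟩ := hsw s
    refine ⟨k, 0, F0.zero_mem, b, ?_⟩
    rw [LinearMap.lsmul_apply, algebraMap_smul, ← hk, smul_comm, h', zero_add, map_smul]
  have hT : T = ⊤ := by
    have e1 : T.map q = ⊤ := by
      rw [eq_top_iff, ← hg, Submodule.span_le]
      intro v hv
      refine ⟨υ v, ?_, h1 v⟩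
      obtain ⟨k, hk⟩ := hsw (σ v)
      exact ⟨k, β v, Submodule.subset_span (by simpa using ⟨v, hv, rfl⟩), 0, by rw [← hk, h2]; simp⟩
    have e2 := Submodule.comap_map_mkQ (LinearMap.range (LinearMap.lsmul C U (algebraMap R C x))) T
    rw [sup_eq_right.mpr hxT] at e2
    rw [← e2]
    show (T.map q).comap q = ⊤
    rw [e1, Submodule.comap_top]
  refine ⟨F0, ⟨_, rfl⟩, fun b => ?_⟩
  have hb : ι b ∈ T := by rw [hT]; trivial
  obtain ⟨n, f, hf, b', h⟩ := hb
  rw [← map_smul, IsLocalizedModule.eq_iff_exists S] at h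
  obtain ⟨s, hs⟩ := h
  obtain ⟨k, hk⟩ := hsw s
  refine ⟨k + n, w ^ k • f, F0.smul_mem _ hf, w ^ k • b', ?_⟩
  have hs' : s.1 • (w ^ n • b) = s.1 • (f + x • b') := hs
  rw [hk] at hs'
  rw [pow_add, mul_smul, hs', smul_add, smul_comm x]

theorem fin_step2 (hdim : ringKrullDim R = 2) (x w : R) (hw : w ∈ maximalIdeal R)
    (hx : x ∈ nonZeroDivisors R) (k : ℕ) (hk : maximalIdeal R ^ k ≤ Ideal.span {x, w})
    {B : Type} [CommRing B] [Algebra R B]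
    (hxB : ∀ b : B, x • b = 0 → b = 0) (hwB : ∀ b b' : B, w • b = x • b' → ∃ b'', b = x • b'')
    (hden : ∀ b : B, ∃ c ∈ nonZeroDivisors R, ∃ r : R, c • b = algebraMap R B r) :
    ∃ N : Submodule R B, N.FG ∧ ∀ b : B, ∃ f ∈ N, ∃ b' b'' : B, b = f + x • b' + w • b'' := by
  classical
  obtain ⟨F0, hF0, hF⟩ := fin_step1 hdim x w hw hx hxB hden
  let Y := LinearMap.range (LinearMap.lsmul R B x)
  let U := B ⧸ Y
  let F : Submodule R U := F0.map Y.mkQ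
  have hxU : ∀ u : U, x • u = 0 := by
    intro u
    obtain ⟨b, rfl⟩ := Y.mkQ_surjective u
    rw [← map_smul, Submodule.mkQ_apply, Submodule.Quotient.mk_eq_zero]
    exact ⟨b, rfl⟩
  have hwU : ∀ u : U, w • u = 0 → u = 0 := by
    intro u hu
    obtain ⟨b, rfl⟩ := Y.mkQ_surjective u
    rw [← map_smul, Submodule.mkQ_apply, Submodule.Quotient.mk_eq_zero] at hu
    obtain ⟨b', hb'⟩ := hu
    obtain ⟨b'', hb''⟩ := hwB b b' hb'.symm
    rw [Submodule.mkQ_apply, Submodule.Quotient.mk_eq_zero]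
    exact ⟨b'', hb''.symm⟩
  have hkill : ∀ n : ℕ, ∀ i ∈ Ideal.span {x, w ^ n}, ∀ u : U, ∃ a : R, i • u = a • (w ^ n • u) := by
    intro n i hi u
    obtain ⟨a, b, rfl⟩ := Ideal.mem_span_pair.mp hi
    exact ⟨b, by rw [add_smul, mul_smul, hxU, smul_zero, zero_add, mul_smul]⟩
  have hres := KA w hwU F (hF0.map _) ⟨_, artin_loc2 x w k 1 hk, by
      intro i hi n hn
      obtain ⟨a, ha⟩ := hkill 1 i hi n
      refine ⟨a • n, F.smul_mem _ hn, ?_⟩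
      rw [ha, LinearMap.lsmul_apply, pow_one, smul_comm]⟩ (by
      intro N hN _
      obtain ⟨_, ⟨n, rfl⟩, hc⟩ := finset_denom (Submonoid.powers w) F (by
        intro u
        obtain ⟨b, rfl⟩ := Y.mkQ_surjective u
        obtain ⟨n, f, hf, b', h⟩ := hF b
        refine ⟨w ^ n, ⟨n, rfl⟩, f, hf, ?_⟩
        rw [← map_smul, h, map_add, map_smul, hxU, add_zero]) N hN
      refine ⟨_, artin_loc2 x w k n hk, ?_⟩
      intro i hi u hu
      obtain ⟨a, ha⟩ := hkill n i hi u
      rw [ha]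
      exact F.smul_mem _ (hc u hu))
  let Z := LinearMap.range (LinearMap.lsmul R U w)
  obtain ⟨g, hg⟩ := hres.fg_top
  have hsurj : Function.Surjective (Z.mkQ ∘ₗ Y.mkQ) := Z.mkQ_surjective.comp Y.mkQ_surjective
  let N : Submodule R B := Submodule.span R (g.image (Function.surjInv hsurj) : Finset B)
  have hN : N.map (Z.mkQ ∘ₗ Y.mkQ) = ⊤ := by
    rw [eq_top_iff, ← hg, Submodule.span_le]
    intro v hv
    refine ⟨Function.surjInv hsurj v, Submodule.subset_span ?_, Function.surjInv_eq hsurj v⟩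
    rw [Finset.coe_image]
    exact ⟨v, hv, rfl⟩
  refine ⟨N, ⟨_, rfl⟩, fun b => ?_⟩
  have hb : (Z.mkQ ∘ₗ Y.mkQ) b ∈ N.map (Z.mkQ ∘ₗ Y.mkQ) := by rw [hN]; trivial
  obtain ⟨f, hf, hfb⟩ := hb
  have h1 : Z.mkQ (Y.mkQ (b - f)) = 0 := by
    rw [map_sub, map_sub, sub_eq_zero]; exact hfb.symm
  rw [Submodule.mkQ_apply, Submodule.Quotient.mk_eq_zero] at h1
  obtain ⟨u, hu⟩ := h1
  obtain ⟨b'', rfl⟩ := Y.mkQ_surjective u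
  have h2 : Y.mkQ (b - f - w • b'') = 0 := by
    rw [map_sub, ← hu, map_smul, LinearMap.lsmul_apply, sub_self]
  rw [Submodule.mkQ_apply, Submodule.Quotient.mk_eq_zero] at h2
  obtain ⟨b', hb'⟩ := h2
  refine ⟨f, hf, b', b'', ?_⟩
  rw [LinearMap.lsmul_apply] at hb'
  rw [hb']; abel

end FinPart

section FinB

theorem pi_mem_smul {A : Type*} [CommRing A] {n : ℕ} (J : Ideal A) (f : Fin n → A) :
    f ∈ (J • ⊤ : Submodule A (Fin n → A)) ↔ ∀ i, f i ∈ J := by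
  constructor
  · intro h i
    induction h using Submodule.smul_induction_on' with
    | smul r hr m _ => exact J.mul_mem_right _ hr
    | add x _ y _ hx hy => exact J.add_mem hx hy
  · intro h
    have : f = ∑ i, f i • (Pi.single i (1 : A) : Fin n → A) := by
      ext j
      simp [Finset.sum_apply, Pi.single_apply]
    rw [this]
    exact Submodule.sum_mem _ fun i _ => Submodule.smul_mem_smul (h i) trivial

theorem pi_precomplete {A : Type*} [CommRing A] (m : Ideal A) [IsPrecomplete m A] (n : ℕ) :
    IsPrecomplete m (Fin n → A) := by
  constructor
  intro f hf
  have h1 : ∀ j : Fin n, ∃ L : A, ∀ k, f k j ≡ L [SMOD (m ^ k • ⊤ : Submodule A A)] := by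
    intro j
    apply IsPrecomplete.prec inferInstance (f := fun k => f k j)
    intro a b hab
    have := hf hab
    rw [SModEq.sub_mem, pi_mem_smul] at this
    rw [SModEq.sub_mem]
    simpa using this j
  choose L hL using h1
  refine ⟨L, fun k => ?_⟩
  rw [SModEq.sub_mem, pi_mem_smul]
  intro j
  have := hL j k
  rw [SModEq.sub_mem] at this
  simpa using this

theorem complete_finite {A U : Type*} [CommRing A] [AddCommGroup U] [Module A U] (m : Ideal A)
    [IsPrecomplete m A] [IsHausdorff m U] (N : Submodule A U) (hN : N.FG)
    (h : ∀ u : U, ∃ f ∈ N, u - f ∈ (m • ⊤ : Submodule A U)) : Module.Finite A U := by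
  have : Module.Finite A N := Module.Finite.of_fg hN
  obtain ⟨n, g, hg⟩ := Module.Finite.exists_fin' A N
  have := pi_precomplete m n
  refine Module.Finite.of_surjective (N.subtype ∘ₗ g) ?_
  apply surjective_of_mkQ_comp_surjective (I := m)
  intro u
  obtain ⟨u, rfl⟩ := Submodule.mkQ_surjective _ u
  obtain ⟨f, hf, hu⟩ := h u
  obtain ⟨a, ha⟩ := hg ⟨f, hf⟩
  refine ⟨a, ?_⟩
  simp only [LinearMap.comp_apply, ha, Submodule.mkQ_apply, Submodule.subtype_apply]
  rw [eq_comm, Submodule.Quotient.eq]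
  exact hu

open TensorProduct in
theorem flat_inj {R A B : Type} [CommRing R] [CommRing A] [Algebra R A] [Module.Flat R A]
    [AddCommGroup B] [Module R B] (c : R) (hc : ∀ b : B, c • b = 0 → b = 0) (u : A ⊗[R] B)
    (hu : c • u = 0) : u = 0 := by
  have h1 : Function.Injective (LinearMap.lsmul R B c) :=
    (injective_iff_map_eq_zero _).2 fun b hb => hc b hb
  have h2 := Module.Flat.lTensor_preserves_injective_linearMap (M := A) _ h1
  have h3 : ∀ u : A ⊗[R] B, (LinearMap.lsmul R B c).lTensor A u = c • u := by
    intro u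
    induction u with
    | zero => simp
    | tmul a b => simp
    | add x y hx hy => simp [hx, hy]
  apply h2
  rw [h3, hu, map_zero]

theorem flat_nzd {R A : Type} [CommRing R] [CommRing A] [Algebra R A] [Module.Flat R A]
    (c : R) (hc : c ∈ nonZeroDivisors R) : algebraMap R A c ∈ nonZeroDivisors A := by
  rw [mem_nonZeroDivisors_iff_right]
  intro a ha
  have h := flat_inj (A := A) (B := R) c
    (fun b hb => (mem_nonZeroDivisors_iff_right.1 hc) b (by simpa [mul_comm] using hb))
    ((TensorProduct.rid R A).symm a) (by rw [← map_smul, Algebra.smul_def, mul_comm, ha, map_zero])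
  exact (TensorProduct.rid R A).symm.map_eq_zero_iff.1 h

theorem flat_reg {R A : Type} [CommRing R] [CommRing A] [Algebra R A] [Module.Flat R A]
    (x w : R) (hreg : ∀ a b : R, w * a = x * b → ∃ c, a = x * c) (a b : A)
    (h : algebraMap R A w * a = algebraMap R A x * b) : ∃ c, a = algebraMap R A x * c := by
  have h0 : ∑ i : Fin 2, (![w, -x] : Fin 2 → R) i • (![a, b] : Fin 2 → A) i = 0 := by
    simp [Fin.sum_univ_two, Algebra.smul_def, h]
  obtain ⟨k, p, y, h1, h2⟩ := Module.Flat.isTrivialRelation_of_sum_smul_eq_zero (R := R) (M := A)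
    (f := ![w, -x]) (x := ![a, b]) h0
  have h3 : ∀ j, ∃ c, p 0 j = x * c := by
    intro j
    have := h2 j
    simp [Fin.sum_univ_two] at this
    exact hreg _ (p 1 j) (by linear_combination this)
  choose c hc using h3
  refine ⟨∑ j, c j • y j, ?_⟩
  have := h1 0
  simp [hc] at this
  rw [this, Finset.mul_sum]
  refine Finset.sum_congr rfl fun j _ => ?_
  simp [Algebra.smul_def, mul_assoc]

end FinB

section FinB2

theorem pow_le_span_pow {A U : Type*} [CommRing A] [CommRing U] [Algebra A U] (m : Ideal A) (x w : A)
    (k : ℕ) (hk : m ^ k ≤ Ideal.span {x, w}) (n : ℕ) (u : U)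
    (hu : u ∈ (m ^ (k * n) • ⊤ : Submodule A U)) :
    u ∈ (Ideal.span {algebraMap A U x, algebraMap A U w}) ^ n := by
  rw [Ideal.smul_top_eq_map] at hu
  have h1 : (m ^ (k * n)).map (algebraMap A U) ≤ (Ideal.span {algebraMap A U x, algebraMap A U w}) ^ n := by
    rw [pow_mul, Ideal.map_pow]
    refine Ideal.pow_right_mono ?_ n
    refine (Ideal.map_mono hk).trans ?_
    rw [Ideal.map_span, Set.image_pair]
  exact h1 hu

open TensorProduct in
theorem finite_B {R : Type} [CommRing R] [IsLocalRing R] [IsNoetherianRing R]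
    [IsReduced (AdicCompletion (maximalIdeal R) R)] (hdim : ringKrullDim R = 2) (x w : R)
    (hxm : x ∈ maximalIdeal R) (hw : w ∈ maximalIdeal R) (hx : x ∈ nonZeroDivisors R)
    (hreg : ∀ a b : R, w * a = x * b → ∃ c, a = x * c) (k : ℕ)
    (hk : maximalIdeal R ^ k ≤ Ideal.span {x, w}) {B : Type} [CommRing B] [Algebra R B]
    [Algebra.IsIntegral R B] (hinj : Function.Injective (algebraMap R B))
    (hB : ∀ c ∈ nonZeroDivisors R, ∀ b : B, c • b = 0 → b = 0)
    (hwB : ∀ b b' : B, w • b = x • b' → ∃ b'', b = x • b'')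
    (hden : ∀ b : B, ∃ c ∈ nonZeroDivisors R, ∃ r : R, c • b = algebraMap R B r) :
    Module.Finite R B := by
  obtain ⟨N, hNfg, hN⟩ := fin_step2 hdim x w hw hx k hk (hB x hx) hwB hden
  let A := AdicCompletion (maximalIdeal R) R
  have : IsReduced A := ‹_›
  have : IsNoetherianRing A := compl_noeth R (maximalIdeal R)
  have : Module.Flat R A := AdicCompletion.flat_of_isNoetherian _
  have : IsLocalHom (algebraMap R A) := inferInstance
  have hff : Module.FaithfullyFlat R A := Module.FaithfullyFlat.of_flat_of_isLocalHom
  have hmax : maximalIdeal A = (maximalIdeal R).map (algebraMap R A) :=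
    AdicCompletion.maximalIdeal_eq_map
  have hcomp : IsAdicComplete (maximalIdeal A) A := inferInstance
  have hmem : ∀ r ∈ maximalIdeal R, algebraMap R A r ∈ maximalIdeal A := fun r hr => by
    rw [hmax]; exact Ideal.mem_map_of_mem _ hr
  have hkA : maximalIdeal A ^ k ≤ Ideal.span {algebraMap R A x, algebraMap R A w} := by
    rw [hmax, ← Ideal.map_pow, ← Set.image_pair, ← Ideal.map_span]
    exact Ideal.map_mono hk
  have hsep : IsHausdorff (maximalIdeal A) (A ⊗[R] B) := by
    constructor
    intro u hu
    refine sep_main (A := A) (U := A ⊗[R] B) ?_ (algebraMap R A x) (algebraMap R A w) (hmem x hxm)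
      (hmem w hw) (flat_nzd x hx) (flat_reg x w hreg) ?_ u ?_
    · exact Algebra.TensorProduct.includeLeft_injective (S := R) hinj
    · intro u
      have : ∃ c ∈ nonZeroDivisors R, ∃ α : A, c • u = algebraMap A (A ⊗[R] B) α := by
        induction u with
        | zero => exact ⟨1, one_mem _, 0, by simp⟩
        | tmul a b =>
          obtain ⟨c, hc, r, h⟩ := hden b
          refine ⟨c, hc, r • a, ?_⟩
          rw [← TensorProduct.tmul_smul, h, Algebra.algebraMap_eq_smul_one, TensorProduct.tmul_smul,
            TensorProduct.smul_tmul']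
          rfl
        | add u v hu hv =>
          obtain ⟨c, hc, α, h⟩ := hu
          obtain ⟨d, hd, β, h'⟩ := hv
          refine ⟨c * d, mul_mem hc hd, d • α + c • β, ?_⟩
          have e1 : ∀ (r : R) (α : A), algebraMap A (A ⊗[R] B) (r • α) = r • algebraMap A (A ⊗[R] B) α := by
            intro r α
            exact (TensorProduct.smul_tmul' r α (1 : B)).symm
          rw [map_add, e1, e1, ← h, ← h', smul_add, mul_smul, smul_comm c d u, mul_smul]
      obtain ⟨c, hc, α, h⟩ := this
      refine ⟨algebraMap R A c, ?_, α, ?_⟩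
      · intro u' hu'
        rw [algebraMap_smul] at hu'
        exact flat_inj c (hB c hc) u' hu'
      · rw [algebraMap_smul, h]
    · intro n
      apply pow_le_span_pow (maximalIdeal A) _ _ k hkA
      have := hu (k * n)
      rwa [SModEq.zero] at this
  have hfin : Module.Finite A (A ⊗[R] B) := by
    let ι : B →ₗ[R] A ⊗[R] B := TensorProduct.mk R A B 1
    refine complete_finite (maximalIdeal A) (Submodule.span A (ι '' N)) ?_ ?_
    · obtain ⟨s, hs⟩ := hNfg
      classical
      refine ⟨s.image ι, ?_⟩
      rw [← hs]
      apply le_antisymm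
      · apply Submodule.span_mono
        rw [Finset.coe_image]
        exact Set.image_mono Submodule.subset_span
      · rw [Submodule.span_le]
        rintro _ ⟨b, hb, rfl⟩
        have : ι b ∈ (Submodule.span R (s : Set B)).map ι := Submodule.mem_map_of_mem hb
        rw [Submodule.map_span] at this
        rw [Finset.coe_image]
        exact Submodule.span_le_restrictScalars R A _ this
    · intro u
      induction u with
      | zero => exact ⟨0, zero_mem _, by simp⟩
      | tmul a b =>
        obtain ⟨f, hf, b', b'', rfl⟩ := hN b
        refine ⟨a • ι f, Submodule.smul_mem _ _ (Submodule.subset_span ⟨f, hf, rfl⟩), ?_⟩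
        have : a ⊗ₜ[R] (f + x • b' + w • b'') - a • ι f =
            algebraMap R A x • (a ⊗ₜ[R] b') + algebraMap R A w • (a ⊗ₜ[R] b'') := by
          rw [algebraMap_smul, algebraMap_smul, TensorProduct.tmul_add, TensorProduct.tmul_add,
            TensorProduct.tmul_smul, TensorProduct.tmul_smul]
          have : a • ι f = a ⊗ₜ[R] f := by
            simp [ι, TensorProduct.smul_tmul']
          rw [this]; abel
        rw [this]
        exact add_mem (Submodule.smul_mem_smul (hmem x hxm) trivial)
          (Submodule.smul_mem_smul (hmem w hw) trivial)
      | add u v hu hv =>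
        obtain ⟨f, hf, h⟩ := hu
        obtain ⟨g, hg, h'⟩ := hv
        exact ⟨f + g, add_mem hf hg, by rw [add_sub_add_comm]; exact add_mem h h'⟩
  exact Module.Finite.of_finite_tensorProduct_of_faithfullyFlat A

end FinB2

section Last

theorem EV_extend_smul {R : Type} [CommRing R] {M' M M'' : Type} [AddCommGroup M'] [AddCommGroup M]
    [AddCommGroup M''] [Module R M'] [Module R M] [Module R M'']
    (f : M' →ₗ[R] M) (g : M →ₗ[R] M'') (hf : Function.Injective f)
    (hfg : Function.Exact f g) (hg : Function.Surjective g) (r : R)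
    (h : ∀ e : Abelian.Ext (ModuleCat.of R M'') (ModuleCat.of R R) 1, r • e = 0) (φ : M' →ₗ[R] R) :
    ∃ ψ : M →ₗ[R] R, ψ ∘ₗ f = r • φ := by
  have hS := ses_shortExact f g hf hfg hg
  obtain ⟨x, hx⟩ := Abelian.Ext.contravariant_sequence_exact₁ hS (ModuleCat.of R R)
    (r • Abelian.Ext.mk₀ (ModuleCat.ofHom φ)) (n₁ := 1) rfl (by
      rw [Abelian.Ext.comp_smul]; exact h _)
  rw [← Abelian.Ext.mk₀_smul] at hx
  obtain ⟨ψ, rfl⟩ := (Abelian.Ext.mk₀_bijective _ _).2 x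
  rw [Abelian.Ext.mk₀_comp_mk₀] at hx
  have := (Abelian.Ext.mk₀_bijective _ _).1 hx
  exact ⟨ψ.hom, congrArg ModuleCat.Hom.hom this⟩

theorem ext_killed {R : Type} [CommRing R] {M : Type} [AddCommGroup M] [Module R M] (r : R)
    (h : ∀ m : M, r • m = 0) (i : ℕ) (e : Abelian.Ext (ModuleCat.of R M) (ModuleCat.of R R) i) :
    r • e = 0 := by
  have h1 : r • 𝟙 (ModuleCat.of R M) = 0 := by
    ext m; simpa using h m
  have : r • e = (Abelian.Ext.mk₀ (r • 𝟙 (ModuleCat.of R M))).comp e (zero_add i) := by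
    rw [Abelian.Ext.mk₀_smul, Abelian.Ext.smul_comp, Abelian.Ext.mk₀_id_comp]
  rw [this, h1, Abelian.Ext.mk₀_zero, Abelian.Ext.zero_comp]

theorem IC_inj (R : Type) [CommRing R] : Function.Injective (algebraMap R (IntClosure R)) := by
  intro a b h
  exact IsFractionRing.injective R (FractionRing R) (congrArg Subtype.val h)

theorem IC_tf (R : Type) [CommRing R] (c : R) (hc : c ∈ nonZeroDivisors R) (b : IntClosure R)
    (h : c • b = 0) : b = 0 := by
  have h1 : algebraMap R (FractionRing R) c * b.1 = 0 := by
    rw [← Algebra.smul_def]; exact congrArg Subtype.val h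
  have h2 : IsUnit (algebraMap R (FractionRing R) c) :=
    IsLocalization.map_units (FractionRing R) (⟨c, hc⟩ : nonZeroDivisors R)
  exact Subtype.ext (h2.mul_right_eq_zero.1 h1)

theorem IC_den (R : Type) [CommRing R] (b : IntClosure R) :
    ∃ c ∈ nonZeroDivisors R, ∃ r : R, c • b = algebraMap R (IntClosure R) r := by
  obtain ⟨⟨r, c⟩, h⟩ := IsLocalization.surj (nonZeroDivisors R) b.1
  refine ⟨c, c.2, r, Subtype.ext ?_⟩
  change (c : R) • b.1 = algebraMap R (FractionRing R) r
  rw [← h, Algebra.smul_def, mul_comm]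

theorem IC_S2 (R : Type) [CommRing R] [IsNoetherianRing R] (x w : R) (hx : x ∈ nonZeroDivisors R)
    (hreg : ∀ a b : R, w * a = x * b → ∃ c, a = x * c) (b b' : IntClosure R)
    (h : w • b = x • b') : ∃ b'', b = x • b'' := by
  have h2 : IsUnit (algebraMap R (FractionRing R) x) :=
    IsLocalization.map_units (FractionRing R) (⟨x, hx⟩ : nonZeroDivisors R)
  obtain ⟨v, hv⟩ := h2.exists_left_inv
  have hh : algebraMap R (FractionRing R) w * b.1 = algebraMap R (FractionRing R) x * b'.1 := by
    rw [← Algebra.smul_def, ← Algebra.smul_def]; exact congrArg Subtype.val h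
  have e1 : algebraMap R (FractionRing R) x * (v * b.1) = b.1 := by
    rw [← mul_assoc, mul_comm _ v, hv, one_mul]
  have e2 : algebraMap R (FractionRing R) w * (v * b.1) = b'.1 := by
    rw [mul_left_comm, hh, ← mul_assoc, hv, one_mul]
  have hz := S2_lemma x w hx hreg (v * b.1) (by rw [e1]; exact b.2) (by rw [e2]; exact b'.2)
  refine ⟨⟨v * b.1, hz⟩, Subtype.ext ?_⟩
  change b.1 = x • (v * b.1)
  rw [Algebra.smul_def, e1]

theorem reduced_of_compl (R : Type) [CommRing R] [IsLocalRing R] [IsNoetherianRing R]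
    [IsReduced (AdicCompletion (maximalIdeal R) R)] : IsReduced R := by
  have hff : Module.FaithfullyFlat R (AdicCompletion (maximalIdeal R) R) :=
    Module.FaithfullyFlat.of_flat_of_isLocalHom
  exact isReduced_of_injective (algebraMap R (AdicCompletion (maximalIdeal R) R))
    (FaithfulSMul.algebraMap_injective _ _)

theorem IC_lin (R : Type) [CommRing R] (ψ : IntClosure R →ₗ[R] R) (b : IntClosure R) :
    algebraMap R (IntClosure R) (ψ b) = ψ 1 • b := by
  obtain ⟨c, hc, r, h⟩ := IC_den R b
  rw [← sub_eq_zero]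
  apply IC_tf R c hc
  rw [smul_sub, smul_comm c (ψ 1) b, h, ← sub_eq_zero.2 (rfl : (0 : IntClosure R) = 0)]
  have e : c * ψ b = r * ψ 1 := by
    rw [← smul_eq_mul, ← map_smul, h, Algebra.algebraMap_eq_smul_one, map_smul, smul_eq_mul]
  rw [sub_self, sub_eq_zero, Algebra.smul_def, Algebra.smul_def, ← map_mul, ← map_mul, e, mul_comm]

end Last

-- STATEMENT 10
theorem stmt10 (R : Type) [CommRing R] [IsLocalRing R]
    (hau : AnalyticallyUnramified R) (hgor : IsGorensteinLocal R)
    (hdim : ringKrullDim R = 2) :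
    (∏ i ∈ Finset.range 3, Module.annihilator R (ExtMod R (IntClosureQuot R) R i)) =
      conductorIdeal R := by
  obtain ⟨hN, hid⟩ := hgor
  have : IsReduced (AdicCompletion (maximalIdeal R) R) := hau
  have : IsReduced R := reduced_of_compl R
  have hfin : ∃ n, ∀ i, n < i → PV R i := by
    obtain ⟨n, hn⟩ := hid
    refine ⟨n, fun i hi N _ _ _ => ?_⟩
    obtain ⟨j, rfl⟩ : ∃ j, i = j + 1 := ⟨i - 1, by omega⟩
    exact (oldExt_subsingleton _ _ j).1 (hn (ModuleCat.of R N) _ hi)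
  obtain ⟨hP, x, hxm, w, hwm, hx, hreg, k, hk⟩ := gor_main hdim hfin
  have : Algebra.IsIntegral R (IntClosure R) := inferInstance
  have hF : Module.Finite R (IntClosure R) :=
    finite_B hdim x w hxm hwm hx hreg k hk (IC_inj R) (IC_tf R) (IC_S2 R x w hx hreg) (IC_den R)
  have hinj : Function.Injective (Algebra.linearMap R (IntClosure R)) := IC_inj R
  have hex : Function.Exact (Algebra.linearMap R (IntClosure R))
      (LinearMap.range (Algebra.linearMap R (IntClosure R))).mkQ := by
    rw [LinearMap.exact_iff, Submodule.ker_mkQ]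
  have hsur := Submodule.mkQ_surjective (LinearMap.range (Algebra.linearMap R (IntClosure R)))
  have hB2 : EV R (IntClosure R) 2 := by
    refine EV_nak x hxm ?_ 2 (hP _)
    exact (injective_iff_map_eq_zero _).2 fun b hb => IC_tf R x hx b hb
  have hM2 : EV R (IntClosureQuot R) 2 :=
    EV_right _ _ hinj hex hsur 1 (EV_proj 0) hB2
  have h0 : Module.annihilator R (ExtMod R (IntClosureQuot R) R 0) = ⊤ := by
    rw [Module.annihilator_eq_top_iff]
    apply oldExt_zero
    intro f
    refine ModuleCat.hom_ext (LinearMap.ext fun m => ?_)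
    obtain ⟨b, rfl⟩ := hsur m
    obtain ⟨c, hc, r, h⟩ := IC_den R b
    have h1 : c • (LinearMap.range (Algebra.linearMap R (IntClosure R))).mkQ b = 0 := by
      rw [← map_smul, h, Submodule.mkQ_apply, Submodule.Quotient.mk_eq_zero]
      exact ⟨r, rfl⟩
    have h2 : c • f.hom ((LinearMap.range (Algebra.linearMap R (IntClosure R))).mkQ b) = 0 := by
      rw [← map_smul, h1, map_zero]
    exact (mem_nonZeroDivisors_iff_right.1 hc) _ (by rw [mul_comm]; exact h2)
  have h2 : Module.annihilator R (ExtMod R (IntClosureQuot R) R 2) = ⊤ := by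
    rw [Module.annihilator_eq_top_iff]
    exact (oldExt_subsingleton _ _ 1).2 hM2
  have h1 : Module.annihilator R (ExtMod R (IntClosureQuot R) R 1) = conductorIdeal R := by
    ext r
    rw [conductorIdeal, Module.mem_annihilator, Module.mem_annihilator]
    refine (oldExt_newExt _ _ 0 r).trans ?_
    constructor
    · intro h m
      obtain ⟨ψ, hψ⟩ := EV_extend_smul _ _ hinj hex hsur r h LinearMap.id
      obtain ⟨b, rfl⟩ := hsur m
      have e : ψ 1 = r := by
        have := LinearMap.congr_fun hψ 1
        simpa using this
      rw [← map_smul, Submodule.mkQ_apply, Submodule.Quotient.mk_eq_zero]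
      exact ⟨ψ b, by rw [← e]; exact IC_lin R ψ b⟩
    · intro h e
      exact ext_killed r h _ e
  rw [Finset.prod_range_succ, Finset.prod_range_succ, Finset.prod_range_one, h0, h1, h2,
    Ideal.top_mul, Ideal.mul_top]
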